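/- arXiv:2110.10146 — 5 statements merged into one kernel-verified Lean document; each statement's English description precedes it below -/
import Mathlib

section
/- For every integer k with 2 ≤ k ≤ 20, there exists a unique real σ > 1 such that P_k(σ) = P(σ); moreover P_k(s) > P(s) for all s with 1 < s < σ, and P_k(s) < P(s) for all s > σ. -/
open MeasureTheory Real

/-- The prime zeta function `P(s) = ∑_p p^{-s}` (sum over all primes). -/
noncomputable def primeZeta (s : ℝ) : ℝ := ∑' p : Nat.Primes, (p.1 : ℝ) ^ (-s)

/-- The set of `k`-almost primes: positive integers with exactly `k` prime
factors counted with multiplicity. -/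
def almostPrimes (k : ℕ) : Set ℕ := {n | 0 < n ∧ n.primeFactorsList.length = k}

/-- `P_k(s) = ∑_{n ∈ N_k} n^{-s}`; note `P_0(s) = 1` since `N_0 = {1}`. -/
noncomputable def Pk (k : ℕ) (s : ℝ) : ℝ := ∑' n : almostPrimes k, (n.1 : ℝ) ^ (-s)

/-- Translated sum `f(A, h) = ∑_{a ∈ A} 1/(a (log a + h))`. -/
noncomputable def transSum (A : Set ℕ) (h : ℝ) : ℝ :=
  ∑' a : A, 1 / ((a.1 : ℝ) * (Real.log a.1 + h))

namespace Aux

def gpf (m : ℕ) : ℕ := m.primeFactors.sup id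

def S (M : ℕ) : Set Nat.Primes := {p | M ≤ p.1}

lemma gpf_mul (m : ℕ) (hm : m ≠ 0) (p : Nat.Primes) (h : gpf m ≤ p.1) : gpf (m * p.1) = p.1 := by
  unfold gpf at *
  rw [Nat.primeFactors_mul hm p.2.ne_zero, Finset.sup_union, p.2.primeFactors]
  simpa using h

lemma mem_iff (k n : ℕ) : n ∈ almostPrimes k ↔ 0 < n ∧ ArithmeticFunction.cardFactors n = k := by
  simp [almostPrimes, ArithmeticFunction.cardFactors_apply]

lemma mul_mem (k m : ℕ) (hm : m ∈ almostPrimes k) (p : Nat.Primes) :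
    m * p.1 ∈ almostPrimes (k+1) := by
  rw [mem_iff] at *
  refine ⟨Nat.mul_pos hm.1 p.2.pos, ?_⟩
  rw [ArithmeticFunction.cardFactors_mul hm.1.ne' p.2.ne_zero, hm.2,
    ArithmeticFunction.cardFactors_apply_prime p.2]

def f (k : ℕ) (x : Σ m : almostPrimes k, S (gpf m.1)) : almostPrimes (k+1) :=
  ⟨x.1.1 * x.2.1.1, mul_mem k _ x.1.2 _⟩

lemma f_bij (k : ℕ) : Function.Bijective (f k) := by
  constructor
  · rintro ⟨⟨m, hm⟩, ⟨p, hp⟩⟩ ⟨⟨m', hm'⟩, ⟨p', hp'⟩⟩ h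
    have h0 : m * p.1 = m' * p'.1 := congrArg Subtype.val h
    have h1 : p = p' := by
      apply Subtype.ext
      rw [← gpf_mul m hm.1.ne' p hp, ← gpf_mul m' hm'.1.ne' p' hp', h0]
    subst h1
    have h2 : m = m' := Nat.eq_of_mul_eq_mul_right p.2.pos h0
    subst h2
    rfl
  · rintro ⟨n, hn⟩
    have hn' := (mem_iff _ _).1 hn
    have hne : n.primeFactors.Nonempty := by
      rw [Nat.nonempty_primeFactors]
      by_contra hlt
      have : n = 1 := by omega
      subst this
      simp at hn'
    obtain ⟨p, hp, hpe⟩ := Finset.exists_mem_eq_sup _ hne id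
    have hpp := Nat.prime_of_mem_primeFactors hp
    obtain ⟨m, rfl⟩ := Nat.dvd_of_mem_primeFactors hp
    have hm0 : m ≠ 0 := by rintro rfl; simp at hn'
    have hm : m ∈ almostPrimes k := by
      rw [mem_iff]
      refine ⟨Nat.pos_of_ne_zero hm0, ?_⟩
      have := hn'.2
      rw [ArithmeticFunction.cardFactors_mul hpp.ne_zero hm0, 
        ArithmeticFunction.cardFactors_apply_prime hpp] at this
      omega
    have hg : gpf m ≤ p := by
      have : (p * m).primeFactors.sup id = p := hpe
      rw [← this]
      apply Finset.sup_mono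
      exact Nat.primeFactors_mono (Dvd.intro_left _ rfl) hn'.1.ne'
    refine ⟨⟨⟨m, hm⟩, ⟨⟨p, hpp⟩, hg⟩⟩, ?_⟩
    apply Subtype.ext
    exact Nat.mul_comm _ _

noncomputable def e (k : ℕ) := Equiv.ofBijective (f k) (f_bij k)

lemma summable_sub (A : Set ℕ) {s : ℝ} (hs : 1 < s) :
    Summable (fun n : A => (n.1 : ℝ) ^ (-s)) :=
  (Real.summable_nat_rpow.2 (by linarith)).subtype A

lemma summable_pr {s : ℝ} (hs : 1 < s) :
    Summable (fun n : Nat.Primes => (n.1 : ℝ) ^ (-s)) :=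
  summable_sub {p | p.Prime} hs

noncomputable def F (M : ℕ) (s : ℝ) : ℝ := ∑' p : S M, (p.1.1 : ℝ) ^ (-s)
noncomputable def L (M : ℕ) (s : ℝ) : ℝ := ∑' p : ↥(S M)ᶜ, (p.1.1 : ℝ) ^ (-s)

lemma F_add_L (M : ℕ) {s : ℝ} (hs : 1 < s) : F M s + L M s = primeZeta s :=
  (summable_pr hs).tsum_subtype_add_tsum_subtype_compl (S M)

lemma nn (n : ℕ) (s : ℝ) : (0:ℝ) ≤ (n : ℝ) ^ s := Real.rpow_nonneg (by positivity) _

lemma F_nonneg (M : ℕ) (s : ℝ) : 0 ≤ F M s := tsum_nonneg fun _ => nn _ _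
lemma L_nonneg (M : ℕ) (s : ℝ) : 0 ≤ L M s := tsum_nonneg fun _ => nn _ _

lemma F_le (M : ℕ) {s : ℝ} (hs : 1 < s) : F M s ≤ primeZeta s := by
  linarith [F_add_L M hs, L_nonneg M s]

lemma sig_summable (k : ℕ) {s : ℝ} (hs : 1 < s) :
    Summable (fun x : Σ m : almostPrimes k, S (gpf m.1) =>
      (x.1.1 : ℝ) ^ (-s) * (x.2.1.1 : ℝ) ^ (-s)) := by
  refine ((e k).summable_iff.2 (summable_sub (almostPrimes (k+1)) hs)).congr ?_
  intro x
  show ((x.1.1 * x.2.1.1 : ℕ) : ℝ) ^ (-s) = _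
  rw [Nat.cast_mul, Real.mul_rpow (by positivity) (by positivity)]

lemma dec_hasSum (k : ℕ) {s : ℝ} (hs : 1 < s) :
    HasSum (fun m : almostPrimes k => (m.1 : ℝ) ^ (-s) * F (gpf m.1) s) (Pk (k+1) s) := by
  have h1 : Pk (k+1) s = ∑' x : Σ m : almostPrimes k, S (gpf m.1),
      (x.1.1 : ℝ) ^ (-s) * (x.2.1.1 : ℝ) ^ (-s) := by
    rw [Pk, ← (e k).tsum_eq]
    apply tsum_congr
    intro x
    show ((x.1.1 * x.2.1.1 : ℕ) : ℝ) ^ (-s) = _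
    rw [Nat.cast_mul, Real.mul_rpow (by positivity) (by positivity)]
  rw [h1]
  refine (sig_summable k hs).hasSum.sigma ?_
  intro m
  exact (((summable_pr hs).subtype (S (gpf m.1))).hasSum).mul_left ((m.1 : ℝ) ^ (-s))

lemma key1 (M : ℕ) (hM : 1 ≤ M) {s t : ℝ} (hs : 1 < s) (hst : s < t) :
    F M t * primeZeta s ≤ F M s * primeZeta t := by
  have ht := hs.trans hst
  have hM' : (1:ℝ) ≤ M := by exact_mod_cast hM
  have hp : ∀ n : ℕ, 0 < n → (n:ℝ)^(-t) = (n:ℝ)^(-(t-s)) * (n:ℝ)^(-s) := by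
    intro n hn
    rw [← Real.rpow_add (by positivity)]; congr 1; ring
  have h1 : F M t ≤ (M:ℝ)^(-(t-s)) * F M s := by
    unfold F
    rw [← tsum_mul_left]
    refine Summable.tsum_le_tsum ?_ ((summable_pr ht).subtype (S M))
      (((summable_pr hs).subtype (S M)).mul_left _)
    intro p
    rw [hp _ p.1.2.pos]
    refine mul_le_mul_of_nonneg_right ?_ (nn _ _)
    exact Real.rpow_le_rpow_of_nonpos (by linarith) (by exact_mod_cast p.2) (by linarith)
  have h2 : (M:ℝ)^(-(t-s)) * L M s ≤ L M t := by
    unfold L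
    rw [← tsum_mul_left]
    refine Summable.tsum_le_tsum ?_ (((summable_pr hs).subtype (S M)ᶜ).mul_left _)
      ((summable_pr ht).subtype (S M)ᶜ)
    intro p
    rw [hp _ p.1.2.pos]
    refine mul_le_mul_of_nonneg_right ?_ (nn _ _)
    have : p.1.1 < M := not_le.1 p.2
    exact Real.rpow_le_rpow_of_nonpos (by exact_mod_cast p.1.2.pos) (by exact_mod_cast this.le)
      (by linarith)
  rw [← F_add_L M hs, ← F_add_L M ht]
  have h3 := mul_le_mul_of_nonneg_right h1 (L_nonneg M s)
  have h4 := mul_le_mul_of_nonneg_left h2 (F_nonneg M s)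
  nlinarith

lemma key (M : ℕ) {s t : ℝ} (hs : 1 < s) (hst : s < t) :
    F M t * primeZeta s ≤ F M s * primeZeta t := by
  rcases Nat.eq_zero_or_pos M with rfl | h
  · have : S 0 = S 1 := by
      ext p
      simp only [S, Set.mem_ofPred_eq]
      have := p.2.pos
      omega
    have h := key1 1 le_rfl hs hst
    unfold F at *
    rwa [this]
  · exact key1 M h hs hst

lemma zeta_pos {s : ℝ} (hs : 1 < s) : 0 < primeZeta s := by
  refine (summable_pr hs).tsum_pos (fun _ => nn _ _) ⟨2, Nat.prime_two⟩ ?_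
  positivity

lemma inj2 (k : ℕ) {s : ℝ} (hs : 1 < s) : (2:ℝ)^(-s) * Pk k s ≤ Pk (k+1) s := by
  unfold Pk
  rw [← tsum_mul_left]
  refine Summable.tsum_le_tsum_of_inj
    (fun m : almostPrimes k => (⟨m.1 * 2, mul_mem k _ m.2 ⟨2, Nat.prime_two⟩⟩ : almostPrimes (k+1)))
    ?_ ?_ ?_ ((summable_sub _ hs).mul_left _) (summable_sub _ hs)
  · intro a b h
    have := congrArg Subtype.val h
    apply Subtype.ext
    simp at this
    exact this
  · intro c _; exact nn _ _
  · intro m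
    push_cast
    rw [Real.mul_rpow (by positivity) (by positivity), mul_comm]

lemma Pk_zero (s : ℝ) : Pk 0 s = 1 := by
  have : almostPrimes 0 = {1} := by
    ext n
    rw [mem_iff]
    simp
    constructor
    · rintro ⟨h, h | h⟩ <;> omega
    · rintro rfl; simp
  unfold Pk
  rw [this, tsum_singleton (1:ℕ) (fun n : ℕ => (n:ℝ)^(-s))]
  simp

lemma one_eq : almostPrimes 1 = {p | p.Prime} := by
  ext n
  rw [mem_iff]
  simp [ArithmeticFunction.cardFactors_eq_one_iff_prime]
  exact fun h => h.pos

lemma Pk_one (s : ℝ) : Pk 1 s = primeZeta s := by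
  unfold Pk primeZeta
  rw [one_eq]
  rfl

lemma Pk_pos (k : ℕ) {s : ℝ} (hs : 1 < s) : 0 < Pk k s := by
  induction k with
  | zero => rw [Pk_zero]; norm_num
  | succ k ih => exact lt_of_lt_of_le (by positivity) (inj2 k hs)

lemma Pk_le (k : ℕ) {s : ℝ} (hs : 1 < s) : Pk (k+1) s ≤ Pk k s * primeZeta s := by
  refine hasSum_le ?_ (dec_hasSum k hs) ((summable_sub (almostPrimes k) hs).hasSum.mul_right _)
  intro m
  exact mul_le_mul_of_nonneg_left (F_le _ hs) (nn _ _)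

lemma mono (k : ℕ) (hk : 1 ≤ k) {s t : ℝ} (hs : 1 < s) (hst : s < t) :
    Pk (k+1) t * primeZeta s < Pk (k+1) s * primeZeta t := by
  have ht := hs.trans hst
  have h : Pk (k+1) t * primeZeta s ≤ (2:ℝ)^(-(t-s)) * (Pk (k+1) s * primeZeta t) := by
    refine hasSum_le ?_ ((dec_hasSum k ht).mul_right _)
      (((dec_hasSum k hs).mul_right (primeZeta t)).mul_left _)
    intro m
    have hm : 2 ≤ m.1 := by
      have := (mem_iff _ _).1 m.2
      by_contra hlt
      have h1 : m.1 = 1 := by omega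
      rw [h1] at this
      simp at this
      omega
    have hmp : (0:ℝ) < m.1 := by positivity
    have e1 : (m.1:ℝ)^(-t) = (m.1:ℝ)^(-(t-s)) * (m.1:ℝ)^(-s) := by
      rw [← Real.rpow_add hmp]; congr 1; ring
    have e2 : (m.1:ℝ)^(-(t-s)) ≤ (2:ℝ)^(-(t-s)) :=
      Real.rpow_le_rpow_of_nonpos (by norm_num) (by exact_mod_cast hm) (by linarith)
    have e3 := key (gpf m.1) hs hst
    calc (m.1:ℝ)^(-t) * F (gpf m.1) t * primeZeta s
        = (m.1:ℝ)^(-(t-s)) * (m.1:ℝ)^(-s) * (F (gpf m.1) t * primeZeta s) := by rw [e1]; ring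
      _ ≤ (2:ℝ)^(-(t-s)) * (m.1:ℝ)^(-s) * (F (gpf m.1) s * primeZeta t) := by
          have := F_nonneg (gpf m.1) t
          have := zeta_pos hs
          gcongr
      _ = _ := by ring
  have hlt : (2:ℝ)^(-(t-s)) < 1 := Real.rpow_lt_one_of_one_lt_of_neg (by norm_num) (by linarith)
  have hpos : 0 < Pk (k+1) s * primeZeta t := mul_pos (Pk_pos _ hs) (zeta_pos ht)
  nlinarith

lemma cont_sub (A : Set ℕ) (hA : ∀ n ∈ A, 0 < n) :
    ContinuousOn (fun s : ℝ => ∑' n : A, (n.1 : ℝ) ^ (-s)) (Set.Ioi 1) := by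
  intro s hs
  have hs' : 1 < s := hs
  obtain ⟨a, ha, has⟩ := exists_between hs'
  have : ContinuousOn (fun s : ℝ => ∑' n : A, (n.1 : ℝ) ^ (-s)) (Set.Ioi a) := by
    refine continuousOn_tsum (u := fun n : A => (n.1:ℝ)^(-a)) ?_ (summable_sub A ha) ?_
    · intro n
      have : (n.1:ℝ) ≠ 0 := by exact_mod_cast (hA _ n.2).ne'
      exact (Continuous.rpow continuous_const continuous_neg (fun _ => Or.inl this)).continuousOn
    · intro n x hx
      rw [Real.norm_of_nonneg (nn _ _)]
      have : (1:ℝ) ≤ n.1 := by exact_mod_cast (hA _ n.2)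
      exact Real.rpow_le_rpow_of_exponent_le this (by have : a < x := hx; linarith)
  exact (this.continuousAt (Ioi_mem_nhds has)).continuousWithinAt

lemma cont_Pk (k : ℕ) : ContinuousOn (Pk k) (Set.Ioi 1) := cont_sub _ fun _ h => h.1
lemma cont_zeta : ContinuousOn primeZeta (Set.Ioi 1) :=
  (cont_Pk 1).congr fun s _ => (Pk_one s).symm

lemma zeta_two : primeZeta 2 < 1 := by
  have h := hasSum_zeta_two
  have h1 : (∑' n : {p : ℕ | p.Prime}, (1:ℝ)/(n.1:ℝ)^2) + ∑' n : ↥{p : ℕ | p.Prime}ᶜ, (1:ℝ)/(n.1:ℝ)^2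
      = π^2/6 := by
    rw [h.summable.tsum_subtype_add_tsum_subtype_compl, h.tsum_eq]
  have h2 : (1:ℝ) ≤ ∑' n : ↥{p : ℕ | p.Prime}ᶜ, (1:ℝ)/(n.1:ℝ)^2 := by
    have hs1 : Summable (fun n : ↥{p : ℕ | p.Prime}ᶜ => (1:ℝ)/(n.1:ℝ)^2) :=
      h.summable.subtype {p : ℕ | p.Prime}ᶜ
    have h11 : (1:ℕ) ∈ {p : ℕ | p.Prime}ᶜ := fun hh => Nat.not_prime_one hh
    have := hs1.le_tsum ⟨1, h11⟩ (fun _ _ => by positivity)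
    simpa using this
  have h3 : primeZeta 2 = ∑' n : {p : ℕ | p.Prime}, (1:ℝ)/(n.1:ℝ)^2 := by
    unfold primeZeta
    refine tsum_congr fun n => ?_
    rw [Real.rpow_neg (by positivity)]
    norm_num
  have := Real.pi_lt_d2
  have := Real.pi_pos
  nlinarith

lemma zeta_large (C : ℝ) : ∃ s, 1 < s ∧ s < 2 ∧ C < primeZeta s := by
  have hns := Nat.Primes.not_summable_one_div
  have h : ∃ T : Finset Nat.Primes, C < ∑ p ∈ T, (1:ℝ)/(p.1:ℝ) := by
    by_contra! hc
    exact hns (summable_of_sum_le (fun _ => by positivity) hc)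
  obtain ⟨T, hT⟩ := h
  have hc : Continuous (fun s : ℝ => ∑ p ∈ T, (p.1:ℝ)^(-s)) := by
    refine continuous_finsetSum _ fun p _ => ?_
    have : (p.1:ℝ) ≠ 0 := by exact_mod_cast p.2.ne_zero
    exact Continuous.rpow continuous_const continuous_neg (fun _ => Or.inl this)
  have hev : ∀ᶠ s in nhds (1:ℝ), C < ∑ p ∈ T, (p.1:ℝ)^(-s) := by
    apply hc.continuousAt.eventually_const_lt
    simpa [Real.rpow_neg_one] using hT
  have hev2 : ∀ᶠ s in nhdsWithin (1:ℝ) (Set.Ioi 1), C < ∑ p ∈ T, (p.1:ℝ)^(-s) :=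
    hev.filter_mono nhdsWithin_le_nhds
  obtain ⟨s, hs, hs2⟩ := (hev2.and (Ioo_mem_nhdsGT (show (1:ℝ) < 2 by norm_num))).exists
  exact ⟨s, hs2.1, hs2.2, hs.trans_le ((summable_pr hs2.1).sum_le_tsum T fun _ _ => nn _ _)⟩

/-- `P^2 ≤ 2 P_2`. -/
lemma sq_le {s : ℝ} (hs : 1 < s) : primeZeta s ^ 2 ≤ 2 * Pk 2 s := by
  let g : Nat.Primes × Nat.Primes → ℝ := fun x => (x.1.1:ℝ)^(-s) * (x.2.1:ℝ)^(-s)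
  have hg : Summable g := (summable_pr hs).mul_of_nonneg (summable_pr hs)
    (fun _ => nn _ _) (fun _ => nn _ _)
  have h1 : primeZeta s ^ 2 = ∑' x, g x := by
    rw [sq]
    exact (summable_pr hs).tsum_mul_tsum (summable_pr hs) hg
  let A : Set (Nat.Primes × Nat.Primes) := {x | x.1.1 ≤ x.2.1}
  have hgp : ∀ p : Nat.Primes, gpf p.1 = p.1 := by
    intro p; simp [gpf, p.2.primeFactors]
  have hmem : ∀ x : Nat.Primes × Nat.Primes, x.1.1 * x.2.1 ∈ almostPrimes 2 := fun x =>
    mul_mem 1 _ (by rw [one_eq]; exact x.1.2) x.2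
  have hval : ∀ x : Nat.Primes × Nat.Primes, g x ≤ ((x.1.1 * x.2.1 : ℕ) : ℝ)^(-s) := by
    intro x
    rw [Nat.cast_mul, Real.mul_rpow (by positivity) (by positivity)]
  have hA : ∑' x : A, g x ≤ Pk 2 s := by
    refine Summable.tsum_le_tsum_of_inj (fun x : A => (⟨_, hmem x.1⟩ : almostPrimes 2)) ?_
      (fun _ _ => nn _ _) (fun x => hval x.1) (hg.subtype A) (summable_sub _ hs)
    rintro ⟨⟨p, q⟩, hx⟩ ⟨⟨p', q'⟩, hy⟩ h
    have h0 : p.1 * q.1 = p'.1 * q'.1 := congrArg Subtype.val h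
    have e1 := gpf_mul p.1 p.2.ne_zero q (by rw [hgp]; exact hx)
    have e2 := gpf_mul p'.1 p'.2.ne_zero q' (by rw [hgp]; exact hy)
    have e3 : q.1 = q'.1 := by rw [← e1, ← e2, h0]
    have e4 : p.1 = p'.1 := by
      rw [e3] at h0; exact Nat.eq_of_mul_eq_mul_right q'.2.pos h0
    have e5 : p = p' := Subtype.ext e4
    have e6 : q = q' := Subtype.ext e3
    subst e5 e6
    rfl
  have hB : ∑' x : ↥Aᶜ, g x ≤ Pk 2 s := by
    refine Summable.tsum_le_tsum_of_inj (fun x : ↥Aᶜ => (⟨_, hmem x.1⟩ : almostPrimes 2)) ?_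
      (fun _ _ => nn _ _) (fun x => hval x.1) (hg.subtype Aᶜ) (summable_sub _ hs)
    rintro ⟨⟨p, q⟩, hx⟩ ⟨⟨p', q'⟩, hy⟩ h
    have h0 : p.1 * q.1 = p'.1 * q'.1 := congrArg Subtype.val h
    have hx' : q.1 ≤ p.1 := (lt_of_not_ge (fun hh => hx hh)).le
    have hy' : q'.1 ≤ p'.1 := (lt_of_not_ge (fun hh => hy hh)).le
    have e1 := gpf_mul q.1 q.2.ne_zero p (by rw [hgp]; exact hx')
    have e2 := gpf_mul q'.1 q'.2.ne_zero p' (by rw [hgp]; exact hy')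
    have e3 : p.1 = p'.1 := by rw [← e1, ← e2, mul_comm, h0, mul_comm]
    have e4 : q.1 = q'.1 := by
      rw [e3] at h0; exact Nat.eq_of_mul_eq_mul_left p'.2.pos h0
    have e5 : p = p' := Subtype.ext e3
    have e6 : q = q' := Subtype.ext e4
    subst e5 e6
    rfl
  rw [h1, ← hg.tsum_subtype_add_tsum_subtype_compl A]
  linarith

lemma Pk_ge (k : ℕ) {s : ℝ} (hs : 1 < s) (hs2 : s < 2) :
    primeZeta s ^ 2 ≤ 2 * 4 ^ k * Pk (k+2) s := by
  induction k with
  | zero => simpa using sq_le hs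
  | succ k ih =>
    have h1 := inj2 (k+2) hs
    have h2 : (1/4:ℝ) ≤ 2^(-s) := by
      have : (2:ℝ)^(-2:ℝ) ≤ 2^(-s) := Real.rpow_le_rpow_of_exponent_le (by norm_num) (by linarith)
      refine le_trans (le_of_eq ?_) this
      rw [Real.rpow_neg (by norm_num)]; norm_num
    have h3 : Pk (k+2) s ≤ 4 * Pk (k+1+2) s := by
      have := Pk_pos (k+2) hs
      have e : k + 1 + 2 = k + 2 + 1 := by ring
      rw [e]
      nlinarith
    calc _ ≤ _ := ih
      _ ≤ 2 * 4^k * (4 * Pk (k+1+2) s) := by gcongr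
      _ = _ := by ring

end Aux

/-- For `2 ≤ k ≤ 20` there is a unique real `σ > 1` with `P_k(σ) = P(σ)`;
moreover `P_k > P` on `(1, σ)` and `P_k < P` on `(σ, ∞)`. -/
theorem stmt_8 (k : ℕ) (hk2 : 2 ≤ k) (hk20 : k ≤ 20) :
    (∃! σ : ℝ, 1 < σ ∧ Pk k σ = primeZeta σ) ∧
    (∀ σ : ℝ, 1 < σ → Pk k σ = primeZeta σ →
      (∀ s : ℝ, 1 < s → s < σ → primeZeta s < Pk k s) ∧
      (∀ s : ℝ, σ < s → Pk k s < primeZeta s)) := by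
  obtain ⟨j, rfl⟩ : ∃ j, k = j + 2 := ⟨k - 2, by omega⟩
  have main : ∀ σ : ℝ, 1 < σ → Pk (j+2) σ = primeZeta σ →
      (∀ s : ℝ, 1 < s → s < σ → primeZeta s < Pk (j+2) s) ∧
      (∀ s : ℝ, σ < s → Pk (j+2) s < primeZeta s) := by
    intro σ hσ he
    have hp := Aux.zeta_pos hσ
    constructor
    · intro s hs hsσ
      have h := Aux.mono (j+1) (by omega) hs hsσ
      rw [he, mul_comm] at h
      exact lt_of_mul_lt_mul_right h hp.le
    · intro s hs
      have h := Aux.mono (j+1) (by omega) hσ hs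
      rw [he, mul_comm (primeZeta σ)] at h
      exact lt_of_mul_lt_mul_right h hp.le
  refine ⟨?_, main⟩
  obtain ⟨a, ha1, ha2, ha⟩ := Aux.zeta_large (2 * 4 ^ j)
  have h1 : primeZeta a ≤ Pk (j+2) a := by
    have h := Aux.Pk_ge j ha1 ha2
    have hp := Aux.zeta_pos ha1
    have hC : (0:ℝ) < 2 * 4 ^ j := by positivity
    have h' : (2 * 4 ^ j) * primeZeta a ≤ (2 * 4 ^ j) * Pk (j+2) a := by nlinarith
    exact le_of_mul_le_mul_left h' hC
  have h2 : Pk (j+2) 2 ≤ primeZeta 2 := by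
    have hz := Aux.zeta_pos (s := 2) (by norm_num)
    have hz1 := Aux.zeta_two
    have : ∀ i : ℕ, Pk (i+1) 2 ≤ primeZeta 2 := by
      intro i
      induction i with
      | zero => exact (Aux.Pk_one 2).le
      | succ i ih =>
        have := Aux.Pk_le (i+1) (s := 2) (by norm_num)
        have := Aux.Pk_pos (i+1) (s := 2) (by norm_num)
        nlinarith
    exact this (j+1)
  have hc : ContinuousOn (fun s => Pk (j+2) s - primeZeta s) (Set.Icc a 2) :=
    ((Aux.cont_Pk (j+2)).sub Aux.cont_zeta).mono fun x hx => lt_of_lt_of_le ha1 hx.1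
  obtain ⟨σ, hσ, h0⟩ := intermediate_value_Icc' ha2.le hc
    (show (0:ℝ) ∈ Set.Icc _ _ from ⟨by linarith, by linarith⟩)
  have hσ1 : 1 < σ := lt_of_lt_of_le ha1 hσ.1
  have hσe : Pk (j+2) σ = primeZeta σ := by
    have : Pk (j+2) σ - primeZeta σ = 0 := h0
    linarith
  refine ⟨σ, ⟨hσ1, hσe⟩, ?_⟩
  rintro τ ⟨hτ, hτe⟩
  rcases lt_trichotomy τ σ with h | h | h
  · exact absurd hτe ((main σ hσ1 hσe).1 τ hτ h).ne'
  · exact h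
  · exact absurd hτe ((main σ hσ1 hσe).2 τ h).ne
end

section
/- For every integer k with 2 ≤ k ≤ 20, there exists a unique real h_k > 0 such that f(N_k, h_k) = f(N₁, h_k); moreover f(N_k, h) < f(N₁, h) for all real h with 0 ≤ h < h_k, and f(N_k, h) > f(N₁, h) for all real h > h_k. -/
open MeasureTheory Real

lemma aux_mid {n t : ℝ} (hn : 1 ≤ n) (ht : 0 < t) :
    t * n ^ (-(1 + t)) ≤ (n - 1/2) ^ (-t) - (n + 1/2) ^ (-t) := by
  have hn0 : 0 < n := by linarith
  set v : ℝ := 1 / (2 * n) with hv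
  have hv0 : 0 < v := by positivity
  have hv1 : v ≤ 1/2 := by
    rw [hv, div_le_div_iff₀ (by positivity) (by norm_num)]; linarith
  have hA : 2 * v ≤ log (1 + v) - log (1 - v) := by
    have := hasSum_log_sub_log_of_abs_lt_one (x := v) (by rw [abs_of_pos hv0]; linarith)
    have h2 := le_hasSum this 0 (fun j _ => by positivity)
    simpa using h2
  have hB : log (1 + v) ≤ - log (1 - v) := by
    have h1 : log ((1 + v) * (1 - v)) ≤ 0 := by
      apply Real.log_nonpos
      · nlinarith
      · nlinarith
    rw [Real.log_mul (by linarith) (by linarith)] at h1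
    linarith
  have e1 : (n - 1/2) = n * (1 - v) := by rw [hv]; field_simp
  have e2 : (n + 1/2) = n * (1 + v) := by rw [hv]; field_simp
  rw [e1, e2, Real.mul_rpow hn0.le (by linarith), Real.mul_rpow hn0.le (by linarith)]
  have e3 : t * n ^ (-(1 + t)) = n ^ (-t) * (t * (2 * v)) := by
    rw [show -(1 + t) = -t - 1 by ring, Real.rpow_sub_one hn0.ne', hv]; field_simp
  rw [e3, ← mul_sub]
  apply mul_le_mul_of_nonneg_left _ (by positivity)
  rw [Real.rpow_def_of_pos (by linarith), Real.rpow_def_of_pos (by linarith)]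
  set a := log (1 + v)
  set b := log (1 - v)
  have hs : t * (a - b) / 2 ≤ Real.sinh (t * (a - b) / 2) :=
    Real.self_le_sinh_iff.mpr (by apply div_nonneg (mul_nonneg ht.le (by linarith)) (by norm_num))
  have h1 : exp (b * -t) - exp (a * -t) = exp (t * (-b - a) / 2) * (2 * Real.sinh (t * (a - b) / 2)) := by
    rw [Real.sinh_eq, mul_div_cancel₀ _ (two_ne_zero), mul_sub, ← Real.exp_add, ← Real.exp_add]
    ring_nf
  rw [h1]
  have h2 : 1 ≤ exp (t * (-b - a) / 2) := by
    apply Real.one_le_exp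
    apply div_nonneg (mul_nonneg ht.le (by linarith)) (by norm_num)
  have h3 : t * (2 * v) ≤ t * (a - b) := mul_le_mul_of_nonneg_left hA ht.le
  have h4 : 0 ≤ sinh (t * (a - b) / 2) :=
    le_trans (div_nonneg (mul_nonneg ht.le (by linarith)) (by norm_num)) hs
  have h5 : 0 ≤ (rexp (t * (-b - a) / 2) - 1) * (2 * sinh (t * (a - b) / 2)) :=
    mul_nonneg (by linarith) (by linarith)
  nlinarith

lemma aux_zeta_fin {t : ℝ} (ht : 0 < t) (ht1 : t ≤ 1) (N : ℕ) :
    ∑ n ∈ Finset.range N, ((n : ℝ)) ^ (-(1 + t)) ≤ 1 / t + 2/3 := by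
  have key : ∀ N : ℕ, t * ∑ n ∈ Finset.range N, ((n + 2 : ℝ)) ^ (-(1 + t)) ≤
      (3/2 : ℝ) ^ (-t) - (N + 3/2 : ℝ) ^ (-t) := by
    intro N
    induction N with
    | zero => simp
    | succ N ih =>
      rw [Finset.sum_range_succ, mul_add]
      have := aux_mid (n := (N + 2 : ℝ)) (t := t) (by linarith [(Nat.cast_nonneg N : (0:ℝ) ≤ N)]) ht
      rw [show (N + 2 - 1/2 : ℝ) = N + 3/2 by ring, show (N + 2 + 1/2 : ℝ) = (N + 1 : ℕ) + 3/2 by push_cast; ring] at this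
      linarith
  have hb : (3/2 : ℝ) ^ (-t) ≤ 1 - t / 3 := by
    rw [show (3/2 : ℝ) = (2/3)⁻¹ by norm_num, Real.inv_rpow (by norm_num), Real.rpow_neg (by norm_num), inv_inv]
    have := rpow_one_add_le_one_add_mul_self (s := (-1/3 : ℝ)) (by norm_num) ht.le ht1
    norm_num at this
    linarith
  have h0 : ∑ n ∈ Finset.range N, ((n : ℝ)) ^ (-(1 + t)) ≤ ∑ n ∈ Finset.range (N+2), ((n : ℝ)) ^ (-(1 + t)) :=
    Finset.sum_le_sum_of_subset_of_nonneg (Finset.range_mono (by omega)) (fun _ _ _ => by positivity)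
  refine h0.trans ?_
  rw [Finset.sum_range_succ', Finset.sum_range_succ']
  have h1 := key N
  have h2 : (0:ℝ) ≤ (N + 3/2 : ℝ) ^ (-t) := by positivity
  have h3 : ∑ k ∈ Finset.range N, (((k + 1 + 1 : ℕ)) : ℝ) ^ (-(1 + t)) = ∑ n ∈ Finset.range N, ((n + 2 : ℝ)) ^ (-(1 + t)) := by
    apply Finset.sum_congr rfl; intro k _; congr 1; push_cast; ring
  rw [h3]
  have h4 : ((0 : ℕ) : ℝ) ^ (-(1 + t)) = 0 := by
    simp; rw [Real.zero_rpow]; linarith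
  rw [h4]
  simp only [zero_add, Nat.cast_one, Real.one_rpow, add_zero]
  have h5 : ∑ n ∈ Finset.range N, ((n + 2 : ℝ)) ^ (-(1 + t)) ≤ (1 - t/3) / t := by
    rw [le_div_iff₀ ht]; linarith
  have h6 : (1 - t/3)/t = 1/t - 1/3 := by field_simp
  linarith

lemma aux_summable {s : ℝ} (hs : 1 < s) : Summable (fun n : ℕ => (n : ℝ) ^ (-s)) := by
  simpa [Real.rpow_neg] using (Real.summable_nat_rpow_inv.mpr hs)

lemma aux_zeta {t : ℝ} (ht : 0 < t) (ht1 : t ≤ 1) :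
    ∑' n : ℕ, ((n : ℝ)) ^ (-(1 + t)) ≤ 1 / t + 2/3 :=
  Real.tsum_le_of_sum_range_le (fun _ => by positivity) (aux_zeta_fin ht ht1)

noncomputable def powHom (s : ℝ) : ℕ →* ℝ where
  toFun n := (n : ℝ) ^ (-s)
  map_one' := by simp
  map_mul' m n := by push_cast; rw [Real.mul_rpow (by positivity) (by positivity)]

lemma prime_rpow_lt_one {p : ℕ} (hp : p.Prime) {s : ℝ} (hs : 0 < s) : (p : ℝ) ^ (-s) < 1 :=
  Real.rpow_lt_one_of_one_lt_of_neg (by exact_mod_cast hp.one_lt) (by linarith)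

lemma aux_euler {t : ℝ} (ht : 0 < t) (ht1 : t ≤ 1) (T : Finset ℕ) (hT : ∀ p ∈ T, p.Prime) :
    ∑ p ∈ T, (- log (1 - (p : ℝ) ^ (-(1 + t)))) ≤ log (1 / t + 2/3) := by
  have hsum : Summable (powHom (1 + t)) := aux_summable (by linarith)
  have h1 := EulerProduct.prod_filter_prime_geometric_eq_tsum_factoredNumbers hsum T
  rw [Finset.filter_true_of_mem hT] at h1
  have h2 : ∑' m : Nat.factoredNumbers T, powHom (1 + t) m ≤ ∑' m, powHom (1 + t) m :=
    Summable.tsum_subtype_le _ _ (fun a => by show (0:ℝ) ≤ (a : ℝ) ^ (-(1 + t)); positivity) hsum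
  rw [← h1] at h2
  have h3 := h2.trans (aux_zeta ht ht1)
  have hpos : ∀ p ∈ T, (0:ℝ) < (1 - powHom (1 + t) p)⁻¹ := by
    intro p hp
    have := prime_rpow_lt_one (hT p hp) (s := 1 + t) (by linarith)
    exact inv_pos.mpr (by show 0 < 1 - (p : ℝ) ^ (-(1 + t)); linarith)
  have h4 := Real.log_le_log (Finset.prod_pos hpos) h3
  rw [Real.log_prod (fun p hp => (hpos p hp).ne')] at h4
  refine le_trans (le_of_eq ?_) h4
  apply Finset.sum_congr rfl
  intro p hp
  rw [Real.log_inv]; rfl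

lemma aux_xlog {x y : ℝ} (hy : 0 ≤ y) (hxy : y ≤ x) (hx : x < 1) : x + log (1 - x) ≤ y + log (1 - y) := by
  -- log((1-x)/(1-y)) ≤ (1-x)/(1-y) - 1 = (y-x)/(1-y) ≤ y - x
  have h1 := Real.log_le_sub_one_of_pos (x := (1 - x) / (1 - y)) (div_pos (by linarith) (by linarith))
  rw [Real.log_div (by linarith) (by linarith)] at h1
  have h2 : (1 - x) / (1 - y) - 1 ≤ y - x := by
    rw [div_sub_one (by linarith), div_le_iff₀ (by linarith)]
    nlinarith
  linarith

lemma aux_P1 {t δ U y2 y3 y5 : ℝ} (ht : 0 < t) (htδ : t ≤ δ) (hδ : δ ≤ 1)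
    (h2 : 0 ≤ y2) (h3 : 0 ≤ y3) (h5 : 0 ≤ y5)
    (h2' : y2 ≤ (2:ℝ) ^ (-(1 + δ))) (h3' : y3 ≤ (3:ℝ) ^ (-(1 + δ))) (h5' : y5 ≤ (5:ℝ) ^ (-(1 + δ)))
    (hU : (1 / δ + 2/3) * ((1 - y2) * (1 - y3) * (1 - y5)) ≤ exp (U - y2 - y3 - y5))
    (T : Finset ℕ) (hT : ∀ p ∈ T, p.Prime) :
    ∑ p ∈ T, (p : ℝ) ^ (-(1 + t)) ≤ U + log (δ / t) := by
  have hδ0 : 0 < δ := by linarith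
  set W : Finset ℕ := {2, 3, 5} with hW
  have hWp : ∀ p ∈ W, p.Prime := by intro p hp; simp [hW] at hp; rcases hp with rfl | rfl | rfl <;> norm_num
  set T' := T ∪ W
  have hT' : ∀ p ∈ T', p.Prime := by
    intro p hp; rcases Finset.mem_union.mp hp with h | h
    · exact hT p h
    · exact hWp p h
  have s1 : ∑ p ∈ T, (p : ℝ) ^ (-(1 + t)) ≤ ∑ p ∈ T', (p : ℝ) ^ (-(1 + t)) :=
    Finset.sum_le_sum_of_subset_of_nonneg Finset.subset_union_left (fun _ _ _ => by positivity)
  have s2 := aux_euler ht (htδ.trans hδ) T' hT'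
  have hneg : ∀ p ∈ T', (p : ℝ) ^ (-(1 + t)) + log (1 - (p : ℝ) ^ (-(1 + t))) ≤ 0 := by
    intro p hp
    have := aux_xlog (y := 0) (x := (p : ℝ) ^ (-(1 + t))) le_rfl (by positivity) (prime_rpow_lt_one (hT' p hp) (by linarith))
    simpa using this
  have s3 : ∑ p ∈ T', ((p : ℝ) ^ (-(1 + t)) + log (1 - (p : ℝ) ^ (-(1 + t)))) ≤
      ∑ p ∈ W, ((p : ℝ) ^ (-(1 + t)) + log (1 - (p : ℝ) ^ (-(1 + t)))) := by
    have : W ⊆ T' := Finset.subset_union_right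
    rw [← Finset.sum_sdiff this]
    have := Finset.sum_nonpos (s := T' \ W) (f := fun p : ℕ => (p : ℝ) ^ (-(1 + t)) + log (1 - (p : ℝ) ^ (-(1 + t))))
      (fun p hp => hneg p (Finset.mem_sdiff.mp hp).1)
    linarith
  rw [Finset.sum_add_distrib] at s3
  rw [Finset.sum_neg_distrib] at s2
  have s4 : ∑ p ∈ W, ((p : ℝ) ^ (-(1 + t)) + log (1 - (p : ℝ) ^ (-(1 + t)))) ≤
      (y2 + log (1 - y2)) + (y3 + log (1 - y3)) + (y5 + log (1 - y5)) := by
    rw [hW, Finset.sum_insert (by norm_num), Finset.sum_insert (by norm_num), Finset.sum_singleton]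
    have mono0 : ∀ p : ℕ, p.Prime → (p:ℝ) ^ (-(1 + δ)) ≤ (p:ℝ) ^ (-(1 + t)) := fun p hp =>
      Real.rpow_le_rpow_of_exponent_le (by exact_mod_cast hp.one_lt.le) (by linarith)
    have mono : ∀ p : ℕ, p.Prime → ∀ z : ℝ, z = p → z ^ (-(1 + δ)) ≤ z ^ (-(1 + t)) := by
      rintro p hp z rfl; exact mono0 p hp
    have q2 := aux_xlog h2 (h2'.trans (mono 2 (by norm_num) _ (by norm_num))) (by simpa using prime_rpow_lt_one (p := 2) (by norm_num) (s := 1 + t) (by linarith))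
    have q3 := aux_xlog h3 (h3'.trans (mono 3 (by norm_num) _ (by norm_num))) (by simpa using prime_rpow_lt_one (p := 3) (by norm_num) (s := 1 + t) (by linarith))
    have q5 := aux_xlog h5 (h5'.trans (mono 5 (by norm_num) _ (by norm_num))) (by simpa using prime_rpow_lt_one (p := 5) (by norm_num) (s := 1 + t) (by linarith))
    simp only [Nat.cast_ofNat] at *
    linarith
  have hy2 : y2 < 1 := h2'.trans_lt (by simpa using prime_rpow_lt_one (p := 2) (by norm_num) (s := 1 + δ) (by linarith))
  have hy3 : y3 < 1 := h3'.trans_lt (by simpa using prime_rpow_lt_one (p := 3) (by norm_num) (s := 1 + δ) (by linarith))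
  have hy5 : y5 < 1 := h5'.trans_lt (by simpa using prime_rpow_lt_one (p := 5) (by norm_num) (s := 1 + δ) (by linarith))
  have s5 : log (1 / t + 2/3) ≤ log (1 / δ + 2/3) + log (δ / t) := by
    rw [← Real.log_mul (by positivity) (by positivity)]
    apply Real.log_le_log (by positivity)
    have : (1 / δ + 2/3) * (δ / t) = 1 / t + 2/3 * (δ / t) := by field_simp
    rw [this]
    have : 1 ≤ δ / t := by rw [le_div_iff₀ ht]; linarith
    linarith
  have s6 := Real.log_le_log (by
    have := sub_pos.mpr hy2
    have := sub_pos.mpr hy3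
    have := sub_pos.mpr hy5
    positivity) hU
  rw [Real.log_exp, Real.log_mul (by positivity) (mul_ne_zero (mul_ne_zero (by linarith) (by linarith)) (by linarith)),
    Real.log_mul (mul_ne_zero (by linarith) (by linarith)) (by linarith), Real.log_mul (by linarith) (by linarith)] at s6
  linarith

lemma aux_oddsq (T : Finset ℕ) (hT : ∀ p ∈ T, p.Prime) (h2 : 2 ∉ T) :
    ∑ p ∈ T, (1 : ℝ) / (p : ℝ) ^ 2 ≤ 2 / 9 := by
  have key : ∀ N : ℕ, ∑ n ∈ Finset.range N, (1:ℝ) / (2 * n + 11) ^ 2 ≤ 1/20 - 1 / (4 * ((N:ℝ) + 5)) := by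
    intro N
    induction N with
    | zero => norm_num
    | succ N ih =>
      rw [Finset.sum_range_succ]
      have : (1:ℝ) / (2 * N + 11) ^ 2 ≤ 1 / (4 * ((N:ℝ) + 5)) - 1 / (4 * (((N + 1 : ℕ):ℝ) + 5)) := by
        push_cast
        rw [div_sub_div _ _ (by positivity) (by positivity), div_le_div_iff₀ (by positivity) (by positivity)]
        nlinarith [(Nat.cast_nonneg N : (0:ℝ) ≤ N)]
      linarith
  obtain ⟨N, hN⟩ : ∃ N, ∀ p ∈ T, p < N := ⟨T.sup id + 1, fun p hp => Nat.lt_succ_of_le (Finset.le_sup (f := id) hp)⟩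
  set R := (Finset.range N).image (fun n => 2 * n + 11) with hR
  have hsub : T ⊆ {3, 5, 7} ∪ R := by
    intro p hp
    have hpp := hT p hp
    have hodd := hpp.eq_two_or_odd.resolve_left (by rintro rfl; exact h2 hp)
    have := hN p hp
    have := hpp.two_le
    simp only [Finset.mem_union, Finset.mem_insert, Finset.mem_singleton, hR, Finset.mem_image, Finset.mem_range]
    by_cases h : p < 11
    · left
      interval_cases p <;> revert hpp <;> first | omega | norm_num
    · right
      exact ⟨(p - 11)/2, by omega, by omega⟩
  calc _ ≤ ∑ p ∈ {3, 5, 7} ∪ R, (1 : ℝ) / (p : ℝ) ^ 2 :=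
        Finset.sum_le_sum_of_subset_of_nonneg hsub (fun _ _ _ => by positivity)
    _ ≤ ∑ p ∈ ({3, 5, 7} : Finset ℕ), (1 : ℝ) / (p : ℝ) ^ 2 + ∑ p ∈ R, (1 : ℝ) / (p : ℝ) ^ 2 := by
        have := Finset.sum_union_inter (s₁ := ({3, 5, 7} : Finset ℕ)) (s₂ := R) (f := fun p : ℕ => (1 : ℝ) / (p : ℝ) ^ 2)
        have h0 : 0 ≤ ∑ p ∈ ({3, 5, 7} : Finset ℕ) ∩ R, (1 : ℝ) / (p : ℝ) ^ 2 := Finset.sum_nonneg (fun _ _ => by positivity)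
        linarith
    _ ≤ (1/9 + 1/25 + 1/49) + 1/20 := by
        apply add_le_add
        · rw [Finset.sum_insert (by norm_num), Finset.sum_insert (by norm_num), Finset.sum_singleton]; norm_num
        · rw [hR, Finset.sum_image (by intro a _ b _ h; simpa using h)]
          have := key N
          have h0 : (0:ℝ) ≤ 1 / (4 * ((N:ℝ) + 5)) := by positivity
          push_cast
          linarith
    _ ≤ _ := by norm_num

lemma aux_Pj {s : ℝ} (hs : 1 ≤ s) {j : ℕ} (hj : 2 ≤ j) (T : Finset ℕ) (hT : ∀ p ∈ T, p.Prime) :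
    ∑ p ∈ T, (p : ℝ) ^ (-(j * s)) ≤ ((2:ℝ) ^ (-s)) ^ j + 2 * ((3:ℝ) ^ (-s)) ^ j := by
  have e : ∀ x : ℝ, 0 ≤ x → (x ^ (-s)) ^ j = x ^ (-(j * s)) := by
    intro x hx; rw [← Real.rpow_natCast, ← Real.rpow_mul hx]; ring_nf
  rw [e 2 (by norm_num), e 3 (by norm_num)]
  have hjs : 2 ≤ j * s := by
    have : (2:ℝ) ≤ j := by exact_mod_cast hj
    nlinarith
  have h1 : ∑ p ∈ T, (p : ℝ) ^ (-(j * s)) ≤ ∑ p ∈ insert 2 (T.erase 2), (p : ℝ) ^ (-(j * s)) := by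
    apply Finset.sum_le_sum_of_subset_of_nonneg _ (fun _ _ _ => by positivity)
    intro p hp; by_cases h : p = 2 <;> simp [h, hp]
  refine h1.trans ?_
  rw [Finset.sum_insert (by simp)]
  simp only [Nat.cast_ofNat]
  apply add_le_add le_rfl
  have h2 : ∀ p ∈ T.erase 2, (p : ℝ) ^ (-(j * s)) ≤ (9 * (3:ℝ) ^ (-(j * s))) * (1 / (p:ℝ) ^ 2) := by
    intro p hp
    obtain ⟨hp2, hpT⟩ := Finset.mem_erase.mp hp
    have hpp := hT p hpT
    have hp3 : 3 ≤ p := by have := hpp.two_le; omega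
    have hp3' : (3:ℝ) ≤ p := by exact_mod_cast hp3
    have a1 : ((p:ℝ) / 3) ^ (-(j * s)) ≤ ((p:ℝ) / 3) ^ (-2 : ℝ) :=
      Real.rpow_le_rpow_of_exponent_le (by linarith) (by linarith)
    rw [Real.div_rpow (by linarith) (by norm_num)] at a1
    have a2 : ((p:ℝ) / 3) ^ (-2 : ℝ) = 9 / (p:ℝ)^2 := by
      rw [Real.rpow_neg (by positivity)]; norm_num [div_pow]
    rw [a2, div_le_iff₀ (by positivity)] at a1
    calc _ ≤ _ := a1
      _ = _ := by ring
  refine (Finset.sum_le_sum h2).trans ?_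
  rw [← Finset.mul_sum]
  have := aux_oddsq (T.erase 2) (fun p hp => hT p (Finset.mem_erase.mp hp).2) (by simp)
  have h3 : (0:ℝ) < 3 ^ (-(j * s)) := by positivity
  nlinarith

lemma mem_ap {k n : ℕ} : n ∈ almostPrimes k ↔ n ≠ 0 ∧ ArithmeticFunction.cardFactors n = k := by
  simp [almostPrimes, ArithmeticFunction.cardFactors_apply, Nat.pos_iff_ne_zero]

noncomputable def xE (s : ℝ) (n : ℕ) : ENNReal := ENNReal.ofReal ((n : ℝ) ^ (-s))

noncomputable def PE (k : ℕ) (s : ℝ) : ENNReal := ∑' n : almostPrimes k, xE s n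

lemma xE_mul (s : ℝ) (m n : ℕ) : xE s (m * n) = xE s m * xE s n := by
  unfold xE
  rw [← ENNReal.ofReal_mul (by positivity)]
  push_cast
  rw [Real.mul_rpow (by positivity) (by positivity)]

lemma xE_pow (s : ℝ) (p j : ℕ) : xE s (p ^ j) = xE (j * s) p := by
  unfold xE
  congr 1
  push_cast
  rw [← Real.rpow_natCast, ← Real.rpow_mul (by positivity)]
  ring_nf

lemma count_aux {k n : ℕ} (hn : n ∈ almostPrimes k) (X : ENNReal) :
    (k : ENNReal) * X ≤ ∑ j ∈ Finset.Icc 1 k, ∑' p : Nat.Primes, if (p:ℕ) ^ j ∣ n then X else 0 := by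
  obtain ⟨hn0, hk⟩ := mem_ap.mp hn
  have hsum : k = ∑ p ∈ n.primeFactors, n.factorization p := by
    rw [← hk, ArithmeticFunction.cardFactors_eq_sum_factorization]; rfl
  have hv : ∀ p ∈ n.primeFactors, n.factorization p = ∑ j ∈ Finset.Icc 1 k, if p ^ j ∣ n then 1 else 0 := by
    intro p hp
    have hpp := Nat.prime_of_mem_primeFactors hp
    have hle : n.factorization p ≤ k := by
      rw [hsum]; exact Finset.single_le_sum (f := fun p => n.factorization p) (fun _ _ => Nat.zero_le _) hp
    rw [← Finset.sum_filter, Finset.sum_const, smul_eq_mul, mul_one]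
    have : (Finset.Icc 1 k).filter (fun j => p ^ j ∣ n) = Finset.Icc 1 (n.factorization p) := by
      ext j
      simp only [Finset.mem_filter, Finset.mem_Icc, hpp.pow_dvd_iff_le_factorization hn0]
      omega
    rw [this]; simp
  have h1 : (k : ENNReal) * X = ∑ j ∈ Finset.Icc 1 k, ∑ p ∈ n.primeFactors, if p ^ j ∣ n then X else 0 := by
    rw [Finset.sum_comm]
    have : (k : ENNReal) = ∑ p ∈ n.primeFactors, ∑ j ∈ Finset.Icc 1 k, if p ^ j ∣ n then 1 else 0 := by
      conv_lhs => rw [hsum]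
      push_cast
      apply Finset.sum_congr rfl
      intro p hp
      conv_lhs => rw [hv p hp]
      push_cast
      rfl
    rw [this, Finset.sum_mul]
    apply Finset.sum_congr rfl
    intro p hp
    rw [Finset.sum_mul]
    apply Finset.sum_congr rfl
    intro j hj
    split_ifs <;> simp
  rw [h1]
  apply Finset.sum_le_sum
  intro j hj
  have : ∑ p ∈ n.primeFactors, (if p ^ j ∣ n then X else 0) =
      ∑ p : n.primeFactors, (if (p:ℕ) ^ j ∣ n then X else 0) := by
    rw [Finset.sum_coe_sort n.primeFactors (fun p => if p ^ j ∣ n then X else 0)]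
  rw [this]
  refine (tsum_fintype (L := SummationFilter.unconditional _) (fun p : n.primeFactors => if (p:ℕ) ^ j ∣ n then X else 0)).symm.le.trans ?_
  let ι : n.primeFactors → Nat.Primes := fun p => ⟨p.1, Nat.prime_of_mem_primeFactors p.2⟩
  have hι : Function.Injective ι := by
    intro a b h; exact Subtype.ext (congrArg (fun q : Nat.Primes => (q : ℕ)) h)
  exact ENNReal.tsum_comp_le_tsum_of_injective hι (fun p : Nat.Primes => if (p:ℕ) ^ j ∣ n then X else 0)

lemma shift_aux (s : ℝ) (p : Nat.Primes) {j k : ℕ} (hjk : j ≤ k) :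
    ∑' n : almostPrimes k, (if (p:ℕ) ^ j ∣ (n:ℕ) then xE s n else 0) ≤ xE (j * s) p * PE (k - j) s := by
  rw [tsum_subtype (almostPrimes k) (fun n => if (p:ℕ) ^ j ∣ n then xE s n else 0)]
  have hp0 : (p:ℕ) ^ j ≠ 0 := pow_ne_zero _ p.2.ne_zero
  have hinj : Function.Injective (fun m : ℕ => (p:ℕ) ^ j * m) := fun a b h => Nat.eq_of_mul_eq_mul_left (Nat.pos_of_ne_zero hp0) h
  rw [← hinj.tsum_eq]
  · unfold PE
    rw [tsum_subtype (almostPrimes (k - j)) (fun n => xE s n), ← ENNReal.tsum_mul_left]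
    apply ENNReal.tsum_le_tsum
    intro m
    by_cases h : (p:ℕ) ^ j * m ∈ almostPrimes k
    · have hm : m ∈ almostPrimes (k - j) := by
        obtain ⟨h0, hk⟩ := mem_ap.mp h
        have hm0 : m ≠ 0 := right_ne_zero_of_mul h0
        rw [ArithmeticFunction.cardFactors_mul hp0 hm0, ArithmeticFunction.cardFactors_apply_prime_pow p.2] at hk
        exact mem_ap.mpr ⟨hm0, by omega⟩
      rw [Set.indicator_of_mem h, Set.indicator_of_mem hm]
      simp only [dvd_mul_right, if_true]
      rw [xE_mul, xE_pow]
    · rw [Set.indicator_of_notMem h]; exact zero_le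
  · intro n hn
    by_contra h
    apply hn
    apply Set.indicator_apply_eq_zero.mpr
    intro _
    rw [if_neg]
    rintro ⟨m, hm⟩
    exact h ⟨m, hm.symm⟩

lemma newton_aux (k : ℕ) (s : ℝ) :
    (k : ENNReal) * PE k s ≤ ∑ j ∈ Finset.Icc 1 k, (∑' p : Nat.Primes, xE (j * s) p) * PE (k - j) s := by
  unfold PE
  rw [← ENNReal.tsum_mul_left]
  calc _ ≤ ∑' n : almostPrimes k, ∑ j ∈ Finset.Icc 1 k, ∑' p : Nat.Primes, if (p:ℕ) ^ j ∣ (n:ℕ) then xE s n else 0 :=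
        ENNReal.tsum_le_tsum (fun n => count_aux n.2 _)
    _ = ∑ j ∈ Finset.Icc 1 k, ∑' n : almostPrimes k, ∑' p : Nat.Primes, if (p:ℕ) ^ j ∣ (n:ℕ) then xE s n else 0 :=
        Summable.tsum_finsetSum (fun _ _ => ENNReal.summable)
    _ ≤ _ := by
        apply Finset.sum_le_sum
        intro j hj
        rw [ENNReal.tsum_comm, ← ENNReal.tsum_mul_right]
        exact ENNReal.tsum_le_tsum (fun p => shift_aux s p (Finset.mem_Icc.mp hj).2)

noncomputable def hrec (c : ℕ → ℝ) : ℕ → ℝ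
  | 0 => 1
  | (k+1) => (∑ i : Fin (k+1), c (k + 1 - i) * hrec c i) / (k + 1)

lemma hrec_zero (c : ℕ → ℝ) : hrec c 0 = 1 := by rw [hrec]

lemma hrec_succ (c : ℕ → ℝ) (k : ℕ) :
    (k + 1 : ℝ) * hrec c (k + 1) = ∑ i ∈ Finset.range (k + 1), c (k + 1 - i) * hrec c i := by
  rw [hrec, Finset.sum_range (fun i => c (k + 1 - i) * hrec c i)]
  field_simp

lemma hrec_nonneg {c : ℕ → ℝ} (hc : ∀ j, 1 ≤ j → 0 ≤ c j) (k : ℕ) : 0 ≤ hrec c k := by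
  induction k using Nat.strong_induction_on with
  | _ k ih =>
    cases k with
    | zero => rw [hrec_zero]; norm_num
    | succ k =>
      rw [hrec]
      apply div_nonneg _ (by positivity)
      apply Finset.sum_nonneg
      intro i _
      exact mul_nonneg (hc _ (by omega)) (ih i i.2)

lemma hrec_le {c : ℕ → ℝ} {b : ℕ → ℝ} {K : ℕ} (hc : ∀ j, 1 ≤ j → 0 ≤ c j) (hb0 : 1 ≤ b 0)
    (hb : ∀ k, k < K → ∑ i ∈ Finset.range (k + 1), c (k + 1 - i) * b i ≤ (k + 1 : ℝ) * b (k + 1)) :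
    ∀ k, k ≤ K → hrec c k ≤ b k := by
  intro k
  induction k using Nat.strong_induction_on with
  | _ k ih =>
    intro hk
    cases k with
    | zero => rw [hrec_zero]; exact hb0
    | succ k =>
      have h1 := hrec_succ c k
      have h2 : ∑ i ∈ Finset.range (k + 1), c (k + 1 - i) * hrec c i ≤ ∑ i ∈ Finset.range (k + 1), c (k + 1 - i) * b i := by
        apply Finset.sum_le_sum
        intro i hi
        have := Finset.mem_range.mp hi
        exact mul_le_mul_of_nonneg_left (ih i this (by omega)) (hc _ (by omega))
      have h3 := hb k (by omega)
      have h4 : (k + 1 : ℝ) * hrec c (k + 1) ≤ (k + 1 : ℝ) * b (k + 1) := by linarith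
      exact le_of_mul_le_mul_left h4 (by positivity)

lemma PE_zero (s : ℝ) : PE 0 s ≤ 1 := by
  unfold PE
  rw [tsum_subtype (almostPrimes 0) (fun n => xE s n), tsum_eq_single 1]
  · refine (Set.indicator_le_self _ _ _).trans ?_
    simp [xE]
  · intro n hn
    apply Set.indicator_of_notMem
    intro h
    obtain ⟨h0, h1⟩ := mem_ap.mp h
    rcases ArithmeticFunction.cardFactors_eq_zero_iff_eq_zero_or_one.mp h1 with h | h <;> contradiction

lemma PE_le_hrec {c : ℕ → ℝ} {s : ℝ} (hc : ∀ j, 1 ≤ j → 0 ≤ c j)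
    (h : ∀ j : ℕ, 1 ≤ j → ∑' p : Nat.Primes, xE (j * s) p ≤ ENNReal.ofReal (c j)) (k : ℕ) :
    PE k s ≤ ENNReal.ofReal (hrec c k) := by
  induction k using Nat.strong_induction_on with
  | _ k ih =>
    cases k with
    | zero => rw [hrec_zero]; simpa using PE_zero s
    | succ k =>
      have h1 := newton_aux (k + 1) s
      have h2 : ∑ j ∈ Finset.Icc 1 (k+1), (∑' p : Nat.Primes, xE (j * s) p) * PE (k + 1 - j) s ≤
          ∑ j ∈ Finset.Icc 1 (k+1), ENNReal.ofReal (c j * hrec c (k + 1 - j)) := by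
        apply Finset.sum_le_sum
        intro j hj
        obtain ⟨hj1, hj2⟩ := Finset.mem_Icc.mp hj
        rw [ENNReal.ofReal_mul (hc j hj1)]
        exact mul_le_mul' (h j hj1) (ih _ (by omega))
      rw [← ENNReal.ofReal_sum_of_nonneg (fun j hj => mul_nonneg (hc j (Finset.mem_Icc.mp hj).1) (hrec_nonneg hc _))] at h2
      have h3 : ∑ j ∈ Finset.Icc 1 (k+1), c j * hrec c (k + 1 - j) = (k + 1 : ℝ) * hrec c (k + 1) := by
        rw [hrec_succ]
        apply Finset.sum_bij' (fun j _ => k + 1 - j) (fun i _ => k + 1 - i)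
        · intro j hj; simp at *; omega
        · intro j hj; simp at *; omega
        · intro j hj; simp at *; omega
        · intro j hj; simp at *; omega
        · intro j hj
          simp at hj
          rw [show k + 1 - (k + 1 - j) = j by omega]
      rw [h3, ENNReal.ofReal_mul (by positivity)] at h2
      have h4 := h1.trans h2
      have e : ENNReal.ofReal ((k:ℝ) + 1) = ((k + 1 : ℕ) : ENNReal) := by
        rw [← ENNReal.ofReal_natCast]; push_cast; rfl
      rw [e] at h4
      exact (ENNReal.mul_le_mul_iff_right (by simp) (by simp)).mp h4

lemma sumP_le {s B : ℝ} (h : ∀ T : Finset ℕ, (∀ p ∈ T, p.Prime) → ∑ p ∈ T, (p : ℝ) ^ (-s) ≤ B) :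
    ∑' p : Nat.Primes, xE s p ≤ ENNReal.ofReal B := by
  rw [ENNReal.tsum_eq_iSup_sum]
  apply iSup_le
  intro T
  unfold xE
  rw [← ENNReal.ofReal_sum_of_nonneg (fun _ _ => by positivity)]
  apply ENNReal.ofReal_le_ofReal
  have := h (T.image (fun p : Nat.Primes => (p:ℕ))) (by
    intro p hp; obtain ⟨q, _, rfl⟩ := Finset.mem_image.mp hp; exact q.2)
  rw [Finset.sum_image (g := fun p : Nat.Primes => (p:ℕ)) (by intro a _ b _ h; exact Subtype.ext h)] at this
  exact this

lemma finsum_le {k : ℕ} {s B : ℝ} (h : PE k s ≤ ENNReal.ofReal B) (hB : 0 ≤ B) (A : Finset ℕ)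
    (hA : ∀ n ∈ A, n ∈ almostPrimes k) : ∑ n ∈ A, (n : ℝ) ^ (-s) ≤ B := by
  rw [← ENNReal.ofReal_le_ofReal_iff hB, ENNReal.ofReal_sum_of_nonneg (fun _ _ => by positivity)]
  refine le_trans ?_ h
  unfold PE
  rw [tsum_subtype (almostPrimes k) (fun n => xE s n)]
  refine le_trans (le_of_eq ?_) (ENNReal.sum_le_tsum A)
  apply Finset.sum_congr rfl
  intro n hn
  rw [Set.indicator_of_mem (hA n hn)]; rfl

/-- parameters -/
noncomputable def cpar (U x2 x3 : ℝ) (j : ℕ) : ℝ := if j = 1 then U else x2 ^ j + 2 * x3 ^ j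

lemma hrec_hasDeriv (x2 x3 : ℝ) (k : ℕ) (U : ℝ) :
    HasDerivAt (fun U => hrec (cpar U x2 x3) k) (if k = 0 then 0 else hrec (cpar U x2 x3) (k - 1)) U := by
  induction k using Nat.strong_induction_on with
  | _ k ih =>
    cases k with
    | zero => simp only [hrec_zero, if_true]; exact hasDerivAt_const _ _
    | succ k =>
      have hE : ∀ V, hrec (cpar V x2 x3) (k + 1) = (∑ i ∈ Finset.range (k + 1), cpar V x2 x3 (k + 1 - i) * hrec (cpar V x2 x3) i) / (k + 1) := by
        intro V; rw [← hrec_succ]; field_simp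
      have hd : ∀ i ∈ Finset.range (k + 1), HasDerivAt (fun V => cpar V x2 x3 (k + 1 - i) * hrec (cpar V x2 x3) i)
          ((if i = k then hrec (cpar U x2 x3) i else 0) + cpar U x2 x3 (k + 1 - i) * (if i = 0 then 0 else hrec (cpar U x2 x3) (i - 1))) U := by
        intro i hi
        have hi' := Finset.mem_range.mp hi
        have h1 := ih i hi'
        have h2 : HasDerivAt (fun V => cpar V x2 x3 (k + 1 - i)) (if i = k then 1 else 0) U := by
          by_cases hik : i = k
          · subst hik
            simp only [cpar, add_tsub_cancel_left, if_true]
            exact hasDerivAt_id U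
          · have : k + 1 - i ≠ 1 := by omega
            simp only [cpar, this, hik, if_false]
            exact hasDerivAt_const _ _
        have h3 := h2.fun_mul h1
        refine h3.congr_deriv ?_
        split_ifs <;> simp
      have h4 := (HasDerivAt.fun_sum hd).div_const ((k:ℝ) + 1)
      have h5 : (fun V => hrec (cpar V x2 x3) (k + 1)) = fun V => (∑ i ∈ Finset.range (k + 1), cpar V x2 x3 (k + 1 - i) * hrec (cpar V x2 x3) i) / (k + 1) := funext hE
      rw [h5]
      refine h4.congr_deriv ?_
      rw [Finset.sum_add_distrib, Finset.sum_ite_eq' , Finset.sum_range_succ']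
      simp only [Nat.add_eq_zero_iff, one_ne_zero, and_false, if_false, if_true, mul_zero, add_zero, add_tsub_cancel_right,
        Finset.mem_range, Nat.lt_succ_self]
      rw [div_eq_iff (by positivity)]
      cases k with
      | zero => simp
      | succ k =>
        have := hrec_succ (cpar U x2 x3) k
        have e : ∑ i ∈ Finset.range (k + 1), cpar U x2 x3 (k + 1 + 1 - (i + 1)) * hrec (cpar U x2 x3) i =
          ∑ i ∈ Finset.range (k + 1), cpar U x2 x3 (k + 1 - i) * hrec (cpar U x2 x3) i := by
          apply Finset.sum_congr rfl; intro i _; congr 2; omega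
        rw [e, ← this]
        push_cast; ring

lemma PE_cpar {t δ U y2 y3 y5 X2 X3 : ℝ} (ht : 0 < t) (htδ : t ≤ δ) (hδ : δ ≤ 1)
    (h2 : 0 ≤ y2) (h3 : 0 ≤ y3) (h5 : 0 ≤ y5)
    (h2' : y2 ≤ (2:ℝ) ^ (-(1 + δ))) (h3' : y3 ≤ (3:ℝ) ^ (-(1 + δ))) (h5' : y5 ≤ (5:ℝ) ^ (-(1 + δ)))
    (hU : (1 / δ + 2/3) * ((1 - y2) * (1 - y3) * (1 - y5)) ≤ exp (U - y2 - y3 - y5))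
    (hX2 : (2:ℝ) ^ (-(1 + t)) ≤ X2) (hX3 : (3:ℝ) ^ (-(1 + t)) ≤ X3) (k : ℕ) :
    (∀ j, 1 ≤ j → 0 ≤ cpar (U + log (δ / t)) X2 X3 j) ∧
    PE k (1 + t) ≤ ENNReal.ofReal (hrec (cpar (U + log (δ / t)) X2 X3) k) := by
  have hP1 := aux_P1 ht htδ hδ h2 h3 h5 h2' h3' h5' hU
  have hX20 : 0 ≤ X2 := le_trans (by positivity) hX2
  have hX30 : 0 ≤ X3 := le_trans (by positivity) hX3
  have hc : ∀ j, 1 ≤ j → 0 ≤ cpar (U + log (δ / t)) X2 X3 j := by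
    intro j hj
    unfold cpar
    split_ifs
    · have := hP1 ∅ (by simp)
      simpa using this
    · positivity
  refine ⟨hc, PE_le_hrec hc ?_ k⟩
  intro j hj
  apply sumP_le
  intro T hT
  unfold cpar
  split_ifs with h
  · subst h
    have := hP1 T hT
    simpa using this
  · refine (aux_Pj (by linarith) (by omega) T hT).trans ?_
    gcongr

lemma first_piece {δ U y2 y3 y5 : ℝ} (hδ0 : 0 < δ) (hδ : δ ≤ 1)
    (h2 : 0 ≤ y2) (h3 : 0 ≤ y3) (h5 : 0 ≤ y5)
    (h2' : y2 ≤ (2:ℝ) ^ (-(1 + δ))) (h3' : y3 ≤ (3:ℝ) ^ (-(1 + δ))) (h5' : y5 ≤ (5:ℝ) ^ (-(1 + δ)))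
    (hU : (1 / δ + 2/3) * ((1 - y2) * (1 - y3) * (1 - y5)) ≤ exp (U - y2 - y3 - y5))
    (k : ℕ) (A : Finset ℕ) (hA : ∀ n ∈ A, n ∈ almostPrimes k) (hA1 : ∀ n ∈ A, 2 ≤ n) :
    ∑ n ∈ A, (n:ℝ) ^ (-(1 + (0:ℝ))) / log n ≤
      δ * ∑ i ∈ Finset.range (k + 1), hrec (cpar U (1/2) (1/3)) i + ∑ n ∈ A, (n:ℝ) ^ (-(1 + δ)) / log n := by
  set C : ℝ → ℕ → ℝ := fun t => cpar (U + log (δ / t)) (1/2) (1/3) with hC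
  have hPE : ∀ t, 0 < t → t ≤ δ → (∀ j, 1 ≤ j → 0 ≤ C t j) ∧ PE k (1 + t) ≤ ENNReal.ofReal (hrec (C t) k) := by
    intro t ht htδ
    apply PE_cpar ht htδ hδ h2 h3 h5 h2' h3' h5' hU
    · calc (2:ℝ) ^ (-(1 + t)) ≤ (2:ℝ) ^ (-(1:ℝ)) := Real.rpow_le_rpow_of_exponent_le (by norm_num) (by linarith)
        _ = 1/2 := by rw [Real.rpow_neg (by norm_num)]; norm_num
    · calc (3:ℝ) ^ (-(1 + t)) ≤ (3:ℝ) ^ (-(1:ℝ)) := Real.rpow_le_rpow_of_exponent_le (by norm_num) (by linarith)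
        _ = 1/3 := by rw [Real.rpow_neg (by norm_num)]; norm_num
  have hnn : ∀ t, 0 < t → t ≤ δ → ∀ i, 0 ≤ hrec (C t) i := fun t h1 h2 i => hrec_nonneg (hPE t h1 h2).1 i
  let Ψ : ℝ → ℝ := fun t => t * (∑ i ∈ Finset.range (k + 1), hrec (C t) i) + ∑ n ∈ A, (n:ℝ) ^ (-(1 + t)) / log n
  have hder : ∀ t, 0 < t → HasDerivAt Ψ (hrec (C t) k - ∑ n ∈ A, (n:ℝ) ^ (-(1 + t))) t := by
    intro t ht
    have hlog : HasDerivAt (fun t => U + log (δ / t)) (-(1/t)) t := by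
      have h1 : HasDerivAt (fun t : ℝ => δ / t) (-(δ / t^2)) t := by
        have := (hasDerivAt_inv ht.ne').const_mul δ
        refine (this.congr_deriv ?_)
        field_simp
      have h2 := (h1.log (by positivity)).const_add U
      refine h2.congr_deriv ?_
      field_simp
    have hh : ∀ i ∈ Finset.range (k+1), HasDerivAt (fun t => hrec (C t) i) ((if i = 0 then 0 else hrec (C t) (i - 1)) * (-(1/t))) t := by
      intro i _
      exact HasDerivAt.comp t (hrec_hasDeriv (1/2) (1/3) i (U + log (δ / t))) hlog
    have hs := (hasDerivAt_id t).fun_mul (HasDerivAt.fun_sum hh)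
    have hn : ∀ n ∈ A, HasDerivAt (fun t : ℝ => (n:ℝ) ^ (-(1 + t)) / log n) (-(n:ℝ) ^ (-(1 + t))) t := by
      intro n hn
      have hn2 : (2:ℝ) ≤ n := by exact_mod_cast hA1 n hn
      have hl : 0 < log (n:ℝ) := Real.log_pos (by linarith)
      have h0 : HasDerivAt (fun t : ℝ => -(1 + t)) (-1) t := ((hasDerivAt_id t).const_add 1).neg
      have := (h0.const_rpow (a := (n:ℝ)) (by linarith)).div_const (log n)
      refine this.congr_deriv ?_
      field_simp
    have := hs.add (HasDerivAt.fun_sum hn)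
    refine this.congr_deriv ?_
    rw [← Finset.sum_mul, Finset.sum_neg_distrib, Finset.sum_range_succ' (fun i => if i = 0 then (0:ℝ) else hrec (C t) (i - 1)),
      Finset.sum_range_succ (fun i => hrec (C t) i)]
    simp only [Nat.add_eq_zero_iff, one_ne_zero, and_false, if_false, if_true, add_zero, add_tsub_cancel_right, id]
    field_simp
    ring
  have hmono : MonotoneOn Ψ (Set.Ioc 0 δ) := by
    apply monotoneOn_of_deriv_nonneg (convex_Ioc 0 δ)
    · intro t ht; exact (hder t ht.1).continuousAt.continuousWithinAt
    · intro t ht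
      rw [interior_Ioc] at ht
      exact (hder t ht.1).differentiableAt.differentiableWithinAt
    · intro t ht
      rw [interior_Ioc] at ht
      rw [(hder t ht.1).deriv]
      have := finsum_le (hPE t ht.1 ht.2.le).2 (hnn t ht.1 ht.2.le k) A hA
      linarith
  have hle : ∀ t, 0 < t → t ≤ δ → ∑ n ∈ A, (n:ℝ) ^ (-(1 + t)) / log n ≤ Ψ δ := by
    intro t ht htδ
    refine le_trans ?_ (hmono ⟨ht, htδ⟩ ⟨hδ0, le_rfl⟩ htδ)
    have : 0 ≤ t * (∑ i ∈ Finset.range (k + 1), hrec (C t) i) := mul_nonneg ht.le (Finset.sum_nonneg fun i _ => hnn t ht htδ i)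
    simp only [Ψ]
    linarith
  have hΨ : Ψ δ = δ * ∑ i ∈ Finset.range (k + 1), hrec (cpar U (1/2) (1/3)) i + ∑ n ∈ A, (n:ℝ) ^ (-(1 + δ)) / log n := by
    simp only [Ψ, hC]
    rw [div_self hδ0.ne', log_one, add_zero]
  rw [← hΨ]
  have hcont : ContinuousAt (fun t : ℝ => ∑ n ∈ A, (n:ℝ) ^ (-(1 + t)) / log n) 0 := by
    apply Continuous.continuousAt
    apply continuous_finsetSum
    intro n hn
    have hn2 : (2:ℝ) ≤ n := by exact_mod_cast hA1 n hn
    apply Continuous.div_const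
    exact (Real.continuous_const_rpow (by linarith)).comp (by fun_prop)
  have htend : Filter.Tendsto (fun t : ℝ => ∑ n ∈ A, (n:ℝ) ^ (-(1 + t)) / log n) (nhdsWithin 0 (Set.Ioi 0))
      (nhds (∑ n ∈ A, (n:ℝ) ^ (-(1 + (0:ℝ))) / log n)) := hcont.tendsto.mono_left nhdsWithin_le_nhds
  apply le_of_tendsto htend
  filter_upwards [Ioc_mem_nhdsGT hδ0] with t ht
  exact hle t ht.1 ht.2

lemma tanh_aux {y : ℝ} (hy : 0 ≤ y) : 1 - exp (-y) ≤ y * (1 + exp (-y)) / 2 := by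
  have hd : ∀ x : ℝ, HasDerivAt (fun y : ℝ => (y - 2) * exp y + y) ((x - 1) * exp x + 1) x := by
    intro x
    have h1 := ((hasDerivAt_id x).sub_const 2).fun_mul (Real.hasDerivAt_exp x)
    have h2 := h1.fun_add (hasDerivAt_id x)
    refine h2.congr_deriv ?_
    simp only [id]; ring
  have hm : MonotoneOn (fun y : ℝ => (y - 2) * exp y + y) (Set.Ici 0) := by
    apply monotoneOn_of_deriv_nonneg (convex_Ici 0)
    · intro t _; exact (hd t).continuousAt.continuousWithinAt
    · intro t _; exact (hd t).differentiableAt.differentiableWithinAt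
    · intro t _
      rw [(hd t).deriv]
      have h1 := Real.add_one_le_exp (-t)
      have h2 : exp (-t) * exp t = 1 := by rw [← Real.exp_add]; simp
      nlinarith [Real.exp_pos t]
  have := hm (Set.mem_Ici.mpr le_rfl) (Set.mem_Ici.mpr hy) hy
  simp at this
  have h2 : exp (-y) * exp y = 1 := by rw [← Real.exp_add]; simp
  nlinarith [Real.exp_pos (-y)]

lemma trap_aux {n s t : ℝ} (hn : 1 < n) (hst : s ≤ t) :
    n ^ (-s) / log n ≤ (t - s) / 2 * (n ^ (-s) + n ^ (-t)) + n ^ (-t) / log n := by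
  have hl : 0 < log n := Real.log_pos hn
  have hn0 : 0 < n := by linarith
  have e : n ^ (-t) = n ^ (-s) * exp (-((t - s) * log n)) := by
    rw [Real.rpow_def_of_pos hn0, Real.rpow_def_of_pos hn0, ← Real.exp_add]; ring_nf
  have := tanh_aux (y := (t - s) * log n) (mul_nonneg (by linarith) hl.le)
  rw [e]
  have hp : 0 < n ^ (-s) := by positivity
  set E := exp (-((t - s) * log n))
  rw [div_le_iff₀ hl, add_mul, div_mul_cancel₀ _ hl.ne']
  nlinarith

def certOK (UN a2 a3 : ℕ) (c b : List ℕ) : Prop :=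
  UN ≤ c.getD 1 0 ∧ b.getD 0 0 = 1000000 ∧
  (∀ j ∈ Finset.Icc 2 20, a2 ^ j + 2 * a3 ^ j ≤ 1000000 ^ (j - 1) * c.getD j 0) ∧
  ∀ k ∈ Finset.range 20, ∑ i ∈ Finset.range (k + 1), c.getD (k + 1 - i) 0 * b.getD i 0 ≤ 1000000 * ((k + 1) * b.getD (k + 1) 0)

instance (UN a2 a3 : ℕ) (c b : List ℕ) : Decidable (certOK UN a2 a3 c b) := by
  unfold certOK; infer_instance

lemma cert_use {UN a2 a3 : ℕ} {c b : List ℕ} (h : certOK UN a2 a3 c b) {k : ℕ} (hk : k ≤ 20) :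
    hrec (cpar ((UN:ℝ) / 1000000) ((a2:ℝ) / 1000000) ((a3:ℝ) / 1000000)) k ≤ (b.getD k 0 : ℝ) / 1000000 := by
  obtain ⟨h1, h2, h3, h4⟩ := h
  have hc0 : ∀ j, 1 ≤ j → 0 ≤ cpar ((UN:ℝ) / 1000000) ((a2:ℝ) / 1000000) ((a3:ℝ) / 1000000) j := by
    intro j hj; unfold cpar; split_ifs <;> positivity
  have hc : ∀ j, 1 ≤ j → j ≤ 20 → cpar ((UN:ℝ) / 1000000) ((a2:ℝ) / 1000000) ((a3:ℝ) / 1000000) j ≤ (c.getD j 0 : ℝ) / 1000000 := by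
    intro j hj hj'
    unfold cpar
    split_ifs with h
    · subst h
      have : (UN:ℝ) ≤ (c.getD 1 0 : ℝ) := by exact_mod_cast h1
      gcongr
    · have := h3 j (Finset.mem_Icc.mpr ⟨by omega, hj'⟩)
      have h' : (a2:ℝ) ^ j + 2 * (a3:ℝ) ^ j ≤ 1000000 ^ (j - 1) * (c.getD j 0 : ℝ) := by exact_mod_cast this
      obtain ⟨i, rfl⟩ : ∃ i, j = i + 1 := ⟨j - 1, by omega⟩
      rw [div_pow, div_pow, ← mul_div_assoc, ← add_div, div_le_div_iff₀ (by positivity) (by positivity)]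
      rw [add_tsub_cancel_right] at h'
      calc _ ≤ (1000000 ^ i * (c.getD (i+1) 0 : ℝ)) * 1000000 := by gcongr
        _ = _ := by ring
  apply hrec_le (K := 20) (b := fun k => (b.getD k 0 : ℝ) / 1000000) hc0
  · simp only [h2]; norm_num
  · intro k hk
    have := h4 k (Finset.mem_range.mpr hk)
    have h' : ∑ i ∈ Finset.range (k + 1), (c.getD (k + 1 - i) 0 : ℝ) * (b.getD i 0 : ℝ) ≤ 1000000 * (((k:ℝ) + 1) * (b.getD (k + 1) 0 : ℝ)) := by
      exact_mod_cast this
    calc _ ≤ ∑ i ∈ Finset.range (k + 1), ((c.getD (k + 1 - i) 0 : ℝ) / 1000000) * ((b.getD i 0 : ℝ) / 1000000) := by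
          apply Finset.sum_le_sum
          intro i hi
          have := Finset.mem_range.mp hi
          have := hc (k + 1 - i) (by omega) (by omega)
          gcongr
      _ = (∑ i ∈ Finset.range (k + 1), (c.getD (k + 1 - i) 0 : ℝ) * (b.getD i 0 : ℝ)) / 1000000 ^ 2 := by
          rw [Finset.sum_div]; apply Finset.sum_congr rfl; intro i _; ring
      _ ≤ (1000000 * (((k:ℝ) + 1) * (b.getD (k + 1) 0 : ℝ))) / 1000000 ^ 2 := by gcongr
      _ = _ := by ring
  · exact hk

def bS : List ℕ := [1000000, 1542996, 1426531, 1042949, 669319, 396654, 223234, 121334, 64378, 33583, 17309, 8845, 4492, 2271, 1145, 576, 290, 146, 73, 37, 19]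
def bA : List ℕ := [1000000, 1542996, 1356752, 909186, 521687, 272176, 133639, 63062, 28982, 13085, 5838, 2584, 1138, 499, 219, 96, 42, 19, 9, 4, 2]
def bB : List ℕ := [1000000, 872566, 480225, 217063, 88594, 34134, 12712, 4638, 1672, 598, 213, 76, 27, 10, 4, 2, 1, 1, 1, 1, 1]
def bC : List ℕ := [1000000, 465653, 152013, 43252, 11541, 2982, 759, 192, 49, 13, 4, 1, 1, 1, 1, 1, 1, 1, 1, 1, 1]

lemma okS : certOK 1542996 500000 333334 [0, 1542996, 472224, 199075, 87192, 39481, 18369, 8728, 4212, 2055, 1011, 500, 248, 124, 62, 31, 16, 8, 4, 2, 1] bS := by decide +kernel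
lemma okA : certOK 1542996 435277 267582 [0, 1542996, 332667, 120789, 46151, 18369, 7536, 3157, 1342, 575, 248, 108, 47, 21, 9, 4, 2, 1, 1, 1, 1] bA := by decide +kernel
lemma okB : certOK 872566 353555 192452 [0, 872566, 199077, 58451, 18369, 6053, 2055, 711, 248, 88, 31, 11, 4, 2, 1, 1, 1, 1, 1, 1, 1] bB := by decide +kernel
lemma okC : certOK 465653 250000 111112 [0, 465653, 87192, 18369, 4212, 1011, 248, 62, 16, 4, 1, 1, 1, 1, 1, 1, 1, 1, 1, 1, 1] bC := by decide +kernel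

lemma final_num : ∀ k ∈ Finset.Icc 2 20,
    20000 * k * (∑ i ∈ Finset.range (k+1), bS.getD i 0) + 15000 * k * bA.getD k 0 + 40000 * k * bB.getD k 0 +
      (25000 * k + 144280) * bC.getD k 0 ≤ 135000 * 1000000 * k := by decide +kernel

lemma le_rpow_aux {x y r : ℝ} {m q : ℕ} (hx : 0 < x) (hq : q ≠ 0) (hr : r = (m:ℝ) / q) (h : y ^ q * x ^ m ≤ 1) :
    y ≤ x ^ (-r) := by
  by_contra hlt
  push Not at hlt
  have h0 : 0 < x ^ (-r) := by positivity
  have h1 : (x ^ (-r)) ^ q < y ^ q := pow_lt_pow_left₀ hlt h0.le hq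
  have h2 : (x ^ (-r)) ^ q * x ^ m = 1 := by
    rw [← Real.rpow_natCast, ← Real.rpow_natCast, ← Real.rpow_mul hx.le, ← Real.rpow_add hx, hr]
    have : (q:ℝ) ≠ 0 := by exact_mod_cast hq
    rw [show -((m:ℝ) / q) * q + m = 0 by field_simp; ring]; simp
  have : 0 < x ^ m := by positivity
  nlinarith

lemma rpow_le_aux {x y r : ℝ} {m q : ℕ} (hx : 0 < x) (hy : 0 ≤ y) (hq : q ≠ 0) (hr : r = (m:ℝ) / q) (h : 1 ≤ y ^ q * x ^ m) :
    x ^ (-r) ≤ y := by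
  by_contra hlt
  push Not at hlt
  have h1 : y ^ q < (x ^ (-r)) ^ q := pow_lt_pow_left₀ hlt hy hq
  have h2 : (x ^ (-r)) ^ q * x ^ m = 1 := by
    rw [← Real.rpow_natCast, ← Real.rpow_natCast, ← Real.rpow_mul hx.le, ← Real.rpow_add hx, hr]
    have : (q:ℝ) ≠ 0 := by exact_mod_cast hq
    rw [show -((m:ℝ) / q) * q + m = 0 by field_simp; ring]; simp
  have : 0 < x ^ m := by positivity
  nlinarith

lemma exp_lb {z : ℝ} (hz : 0 ≤ z) : 1 + z + z^2/2 + z^3/6 + z^4/24 + z^5/120 + z^6/720 + z^7/5040 + z^8/40320 ≤ exp z := by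
  have := Real.sum_le_exp_of_nonneg hz 9
  refine le_trans (le_of_eq ?_) this
  simp [Finset.sum_range_succ, Nat.factorial]

lemma UA : (1 / (1/5:ℝ) + 2/3) * ((1 - 0.435275) * (1 - 0.26758) * (1 - 0.144955)) ≤ exp (((1542996:ℕ):ℝ)/1000000 - 0.435275 - 0.26758 - 0.144955) := by
  refine le_trans ?_ (exp_lb (by norm_num)); norm_num
lemma UB : (1 / (1/2:ℝ) + 2/3) * ((1 - 0.353553) * (1 - 0.19245) * (1 - 0.089442)) ≤ exp (((872566:ℕ):ℝ)/1000000 - 0.353553 - 0.19245 - 0.089442) := by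
  refine le_trans ?_ (exp_lb (by norm_num)); norm_num
lemma UC : (1 / (1:ℝ) + 2/3) * ((1 - 0.25) * (1 - 0.111111) * (1 - 0.04)) ≤ exp (((465653:ℕ):ℝ)/1000000 - 0.25 - 0.111111 - 0.04) := by
  refine le_trans ?_ (exp_lb (by norm_num)); norm_num

lemma two_pow_le_ap {k n : ℕ} (h : n ∈ almostPrimes k) : 2 ^ k ≤ n := by
  obtain ⟨h0, h1⟩ := h
  rw [← h1]
  conv_rhs => rw [← Nat.prod_primeFactorsList h0.ne']
  apply List.pow_card_le_prod
  intro p hp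
  exact (Nat.prime_of_mem_primeFactorsList hp).two_le

lemma hrec_cert_sum {k : ℕ} {δ : ℝ} {y2 y3 y5 : ℝ} {UN a2 a3 : ℕ} (hδ0 : 0 < δ) (hδ : δ ≤ 1)
    (h2 : 0 ≤ y2) (h3 : 0 ≤ y3) (h5 : 0 ≤ y5)
    (h2' : y2 ≤ (2:ℝ) ^ (-(1 + δ))) (h3' : y3 ≤ (3:ℝ) ^ (-(1 + δ))) (h5' : y5 ≤ (5:ℝ) ^ (-(1 + δ)))
    (hU : (1 / δ + 2/3) * ((1 - y2) * (1 - y3) * (1 - y5)) ≤ exp ((UN:ℝ)/1000000 - y2 - y3 - y5))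
    (hX2 : (2:ℝ) ^ (-(1 + δ)) ≤ (a2:ℝ)/1000000) (hX3 : (3:ℝ) ^ (-(1 + δ)) ≤ (a3:ℝ)/1000000)
    (A : Finset ℕ) (hA : ∀ n ∈ A, n ∈ almostPrimes k) :
    ∑ n ∈ A, (n:ℝ) ^ (-(1 + δ)) ≤ hrec (cpar ((UN:ℝ)/1000000) ((a2:ℝ)/1000000) ((a3:ℝ)/1000000)) k := by
  have := PE_cpar hδ0 le_rfl hδ h2 h3 h5 h2' h3' h5' hU hX2 hX3 k
  rw [div_self hδ0.ne', log_one, add_zero] at this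
  exact finsum_le this.2 (hrec_nonneg this.1 _) A hA

noncomputable def Bk (k : ℕ) : ℝ :=
  (1/5) * ∑ i ∈ Finset.range (k + 1), hrec (cpar (((1542996:ℕ):ℝ)/1000000) (1/2) (1/3)) i
  + (3/20) * hrec (cpar (((1542996:ℕ):ℝ)/1000000) (((435277:ℕ):ℝ)/1000000) (((267582:ℕ):ℝ)/1000000)) k
  + (2/5) * hrec (cpar (((872566:ℕ):ℝ)/1000000) (((353555:ℕ):ℝ)/1000000) (((192452:ℕ):ℝ)/1000000)) k
  + (1/4 + 1 / (k * log 2)) * hrec (cpar (((465653:ℕ):ℝ)/1000000) (((250000:ℕ):ℝ)/1000000) (((111112:ℕ):ℝ)/1000000)) k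

lemma sum_le_Bk {k : ℕ} (hk : 1 ≤ k) (A : Finset ℕ) (hA : ∀ n ∈ A, n ∈ almostPrimes k) :
    ∑ n ∈ A, 1 / ((n:ℝ) * log n) ≤ Bk k := by
  have hA2 : ∀ n ∈ A, 2 ≤ n := fun n hn =>
    le_trans (by calc 2 = 2 ^ 1 := rfl
                   _ ≤ 2 ^ k := Nat.pow_le_pow_right (by norm_num) hk) (two_pow_le_ap (hA n hn))
  have a2 : (0.435275:ℝ) ≤ (2:ℝ) ^ (-(1 + (1/5:ℝ))) := le_rpow_aux (m := 6) (q := 5) (by norm_num) (by norm_num) (by norm_num) (by norm_num)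
  have a3 : (0.26758:ℝ) ≤ (3:ℝ) ^ (-(1 + (1/5:ℝ))) := le_rpow_aux (m := 6) (q := 5) (by norm_num) (by norm_num) (by norm_num) (by norm_num)
  have a5 : (0.144955:ℝ) ≤ (5:ℝ) ^ (-(1 + (1/5:ℝ))) := le_rpow_aux (m := 6) (q := 5) (by norm_num) (by norm_num) (by norm_num) (by norm_num)
  have b2 : (0.353553:ℝ) ≤ (2:ℝ) ^ (-(1 + (1/2:ℝ))) := le_rpow_aux (m := 3) (q := 2) (by norm_num) (by norm_num) (by norm_num) (by norm_num)
  have b3 : (0.19245:ℝ) ≤ (3:ℝ) ^ (-(1 + (1/2:ℝ))) := le_rpow_aux (m := 3) (q := 2) (by norm_num) (by norm_num) (by norm_num) (by norm_num)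
  have b5 : (0.089442:ℝ) ≤ (5:ℝ) ^ (-(1 + (1/2:ℝ))) := le_rpow_aux (m := 3) (q := 2) (by norm_num) (by norm_num) (by norm_num) (by norm_num)
  have c2 : (0.25:ℝ) ≤ (2:ℝ) ^ (-(1 + (1:ℝ))) := le_rpow_aux (m := 2) (q := 1) (by norm_num) (by norm_num) (by norm_num) (by norm_num)
  have c3 : (0.111111:ℝ) ≤ (3:ℝ) ^ (-(1 + (1:ℝ))) := le_rpow_aux (m := 2) (q := 1) (by norm_num) (by norm_num) (by norm_num) (by norm_num)
  have c5 : (0.04:ℝ) ≤ (5:ℝ) ^ (-(1 + (1:ℝ))) := le_rpow_aux (m := 2) (q := 1) (by norm_num) (by norm_num) (by norm_num) (by norm_num)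
  have a2' : (2:ℝ) ^ (-(1 + (1/5:ℝ))) ≤ ((435277:ℕ):ℝ)/1000000 := rpow_le_aux (m := 6) (q := 5) (by norm_num) (by norm_num) (by norm_num) (by norm_num) (by norm_num)
  have a3' : (3:ℝ) ^ (-(1 + (1/5:ℝ))) ≤ ((267582:ℕ):ℝ)/1000000 := rpow_le_aux (m := 6) (q := 5) (by norm_num) (by norm_num) (by norm_num) (by norm_num) (by norm_num)
  have b2' : (2:ℝ) ^ (-(1 + (1/2:ℝ))) ≤ ((353555:ℕ):ℝ)/1000000 := rpow_le_aux (m := 3) (q := 2) (by norm_num) (by norm_num) (by norm_num) (by norm_num) (by norm_num)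
  have b3' : (3:ℝ) ^ (-(1 + (1/2:ℝ))) ≤ ((192452:ℕ):ℝ)/1000000 := rpow_le_aux (m := 3) (q := 2) (by norm_num) (by norm_num) (by norm_num) (by norm_num) (by norm_num)
  have c2' : (2:ℝ) ^ (-(1 + (1:ℝ))) ≤ ((250000:ℕ):ℝ)/1000000 := rpow_le_aux (m := 2) (q := 1) (by norm_num) (by norm_num) (by norm_num) (by norm_num) (by norm_num)
  have c3' : (3:ℝ) ^ (-(1 + (1:ℝ))) ≤ ((111112:ℕ):ℝ)/1000000 := rpow_le_aux (m := 2) (q := 1) (by norm_num) (by norm_num) (by norm_num) (by norm_num) (by norm_num)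
  have f0 := first_piece (δ := 1/5) (by norm_num) (by norm_num) (by norm_num) (by norm_num) (by norm_num) a2 a3 a5 UA k A hA hA2
  have fA := hrec_cert_sum (δ := 1/5) (by norm_num) (by norm_num) (by norm_num) (by norm_num) (by norm_num) a2 a3 a5 UA a2' a3' A hA
  have fB := hrec_cert_sum (δ := 1/2) (by norm_num) (by norm_num) (by norm_num) (by norm_num) (by norm_num) b2 b3 b5 UB b2' b3' A hA
  have fC := hrec_cert_sum (δ := 1) (by norm_num) (by norm_num) (by norm_num) (by norm_num) (by norm_num) c2 c3 c5 UC c2' c3' A hA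
  have t1 : ∑ n ∈ A, (n:ℝ) ^ (-(1 + (1/5:ℝ))) / log n ≤
      (3/20) * ∑ n ∈ A, (n:ℝ) ^ (-(1 + (1/5:ℝ))) + (2/5) * ∑ n ∈ A, (n:ℝ) ^ (-(1 + (1/2:ℝ)))
       + (1/4 + 1 / (k * log 2)) * ∑ n ∈ A, (n:ℝ) ^ (-(1 + (1:ℝ))) := by
    rw [Finset.mul_sum, Finset.mul_sum, Finset.mul_sum, ← Finset.sum_add_distrib, ← Finset.sum_add_distrib]
    apply Finset.sum_le_sum
    intro n hn
    have hn2 : (2:ℝ) ≤ n := by exact_mod_cast hA2 n hn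
    have g1 := trap_aux (n := n) (s := 1 + 1/5) (t := 1 + 1/2) (by linarith) (by norm_num)
    have g2 := trap_aux (n := n) (s := 1 + 1/2) (t := 1 + 1) (by linarith) (by norm_num)
    have g3 : (n:ℝ) ^ (-(1 + (1:ℝ))) / log n ≤ (1 / (k * log 2)) * (n:ℝ) ^ (-(1 + (1:ℝ))) := by
      have : (k:ℝ) * log 2 ≤ log n := by
        rw [← Real.log_pow]
        apply Real.log_le_log (by positivity)
        exact_mod_cast two_pow_le_ap (hA n hn)
      have h2 : 0 < log 2 := Real.log_pos (by norm_num)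
      have hk' : (1:ℝ) ≤ k := by exact_mod_cast hk
      rw [div_eq_mul_one_div, mul_comm]
      gcongr
    linarith
  have e0 : ∑ n ∈ A, 1 / ((n:ℝ) * log n) = ∑ n ∈ A, (n:ℝ) ^ (-(1 + (0:ℝ))) / log n := by
    apply Finset.sum_congr rfl
    intro n _
    rw [add_zero, Real.rpow_neg (by positivity), Real.rpow_one]
    field_simp
  rw [e0]
  have hcoef : 0 ≤ 1/4 + 1 / (k * log 2) := by
    have h2 : 0 < log 2 := Real.log_pos (by norm_num)
    positivity
  have := mul_le_mul_of_nonneg_left fC hcoef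
  unfold Bk
  linarith

lemma hrec_mono {c d : ℕ → ℝ} (hc : ∀ j, 1 ≤ j → 0 ≤ c j) (h : ∀ j, 1 ≤ j → c j ≤ d j) (k : ℕ) : hrec c k ≤ hrec d k := by
  have hd : ∀ j, 1 ≤ j → 0 ≤ d j := fun j hj => (hc j hj).trans (h j hj)
  refine hrec_le (K := k) (b := hrec d) hc (by rw [hrec_zero]) ?_ k le_rfl
  intro i _
  rw [hrec_succ]
  apply Finset.sum_le_sum
  intro j hj
  have := Finset.mem_range.mp hj
  exact mul_le_mul_of_nonneg_right (h _ (by omega)) (hrec_nonneg hd _)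

lemma Bk_le {k : ℕ} (hk2 : 2 ≤ k) (hk : k ≤ 20) : Bk k ≤ 1.35 := by
  have hS : ∀ i ∈ Finset.range (k+1), hrec (cpar (((1542996:ℕ):ℝ)/1000000) (1/2) (1/3)) i ≤ (bS.getD i 0 : ℝ) / 1000000 := by
    intro i hi
    have := Finset.mem_range.mp hi
    refine le_trans ?_ (cert_use okS (by omega))
    apply hrec_mono
    · intro j hj; unfold cpar; split_ifs <;> positivity
    · intro j hj; unfold cpar; split_ifs
      · exact le_rfl
      · have e2 : (1/2:ℝ) ^ j ≤ (((500000:ℕ):ℝ)/1000000) ^ j := pow_le_pow_left₀ (by norm_num) (by norm_num) j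
        have e3 : (1/3:ℝ) ^ j ≤ (((333334:ℕ):ℝ)/1000000) ^ j := pow_le_pow_left₀ (by norm_num) (by norm_num) j
        linarith
  have hS' := Finset.sum_le_sum hS
  rw [← Finset.sum_div] at hS'
  have hA := cert_use okA hk
  have hB := cert_use okB hk
  have hC := cert_use okC hk
  have hn := final_num k (Finset.mem_Icc.mpr ⟨hk2, hk⟩)
  have hn' : (20000 * k * (∑ i ∈ Finset.range (k+1), (bS.getD i 0 : ℝ)) + 15000 * k * (bA.getD k 0 : ℝ) + 40000 * k * (bB.getD k 0 : ℝ) +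
      (25000 * k + 144280) * (bC.getD k 0 : ℝ) : ℝ) ≤ 135000 * 1000000 * k := by exact_mod_cast hn
  have hk0 : (0:ℝ) < k := by positivity
  have hl : 1 / (k * log 2) ≤ 1.4428 / k := by
    have := Real.log_two_gt_d9
    rw [div_le_div_iff₀ (by positivity) hk0]
    nlinarith
  have hC0 : (0:ℝ) ≤ (bC.getD k 0 : ℝ) / 1000000 := by positivity
  have hcoef : 0 ≤ 1/4 + 1 / (k * log 2) := by
    have h2 : 0 < log 2 := Real.log_pos (by norm_num)
    positivity
  have h1 := mul_le_mul_of_nonneg_left hC hcoef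
  have h2 : (1/4 + 1 / (k * log 2)) * ((bC.getD k 0 : ℝ) / 1000000) ≤ (1/4 + 1.4428 / k) * ((bC.getD k 0 : ℝ) / 1000000) := by
    gcongr
  have h3 : (1/5) * ((∑ i ∈ Finset.range (k+1), (bS.getD i 0 : ℝ)) / 1000000) + (3/20) * ((bA.getD k 0 : ℝ) / 1000000)
     + (2/5) * ((bB.getD k 0 : ℝ) / 1000000) + (1/4 + 1.4428 / k) * ((bC.getD k 0 : ℝ) / 1000000) ≤ 1.35 := by
    generalize (∑ i ∈ Finset.range (k+1), (bS.getD i 0 : ℝ)) = s at *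
    generalize (bA.getD k 0 : ℝ) = a at *
    generalize (bB.getD k 0 : ℝ) = b at *
    generalize (bC.getD k 0 : ℝ) = c at *
    have : (1/5) * (s / 1000000) + (3/20) * (a / 1000000) + (2/5) * (b / 1000000) + (1/4 + 1.4428 / k) * (c / 1000000)
      = (20000 * k * s + 15000 * k * a + 40000 * k * b + (25000 * k + 144280) * c) / (100000 * 1000000 * k) := by
      field_simp; ring
    rw [this, div_le_iff₀ (by positivity)]
    linarith
  unfold Bk
  linarith

noncomputable def uh (h : ℝ) (n : ℕ) : ℝ := 1 / ((n:ℝ) * (log n + h))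

lemma two_le_ap {k n : ℕ} (hk : 1 ≤ k) (h : n ∈ almostPrimes k) : 2 ≤ n :=
  le_trans (by calc 2 = 2 ^ 1 := rfl
                 _ ≤ 2 ^ k := Nat.pow_le_pow_right (by norm_num) hk) (two_pow_le_ap h)

lemma mem_ap_one {n : ℕ} : n ∈ almostPrimes 1 ↔ n.Prime := by
  rw [mem_ap, ArithmeticFunction.cardFactors_eq_one_iff_prime]
  exact ⟨fun h => h.2, fun h => ⟨h.ne_zero, h⟩⟩

lemma log_pos_nat {n : ℕ} (hn : 2 ≤ n) : 0 < log (n:ℝ) := Real.log_pos (by exact_mod_cast hn)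

lemma uh_pos {h : ℝ} (hh : 0 ≤ h) {n : ℕ} (hn : 2 ≤ n) : 0 < uh h n := by
  have := log_pos_nat hn
  have : (0:ℝ) < n := by positivity
  unfold uh; positivity

lemma uh_anti {h : ℝ} (hh : 0 ≤ h) {n : ℕ} (hn : 2 ≤ n) : uh h n ≤ uh 0 n := by
  have := log_pos_nat hn
  have : (0:ℝ) < n := by positivity
  unfold uh
  apply one_div_le_one_div_of_le (by positivity)
  gcongr

lemma sum_image_val {k : ℕ} (g : ℕ → ℝ) (s : Finset (almostPrimes k)) :
    ∑ n ∈ s.image (fun n : almostPrimes k => (n:ℕ)), g n = ∑ n ∈ s, g n := by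
  rw [Finset.sum_image (g := fun n : almostPrimes k => (n:ℕ)) (by intro a _ b _ h; exact Subtype.ext h)]

lemma uh0_sum_le {k : ℕ} (hk : 1 ≤ k) (s : Finset (almostPrimes k)) : ∑ n ∈ s, uh 0 n ≤ Bk k := by
  rw [← sum_image_val]
  have := sum_le_Bk hk (s.image (fun n : almostPrimes k => (n:ℕ))) (by
    intro n hn; obtain ⟨m, _, rfl⟩ := Finset.mem_image.mp hn; exact m.2)
  simpa [uh] using this

lemma uh_summable0 {k : ℕ} (hk : 1 ≤ k) : Summable (fun n : almostPrimes k => uh 0 n) :=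
  summable_of_sum_le (fun n => (uh_pos le_rfl (two_le_ap hk n.2)).le) (uh0_sum_le hk)

lemma uh_summable {k : ℕ} (hk : 1 ≤ k) {h : ℝ} (hh : 0 ≤ h) : Summable (fun n : almostPrimes k => uh h n) :=
  Summable.of_nonneg_of_le (fun n => (uh_pos hh (two_le_ap hk n.2)).le) (fun n => uh_anti hh (two_le_ap hk n.2)) (uh_summable0 hk)

lemma trans_eq (k : ℕ) (h : ℝ) : transSum (almostPrimes k) h = ∑' n : almostPrimes k, uh h n := rfl

lemma fin_le {k : ℕ} (hk : 1 ≤ k) {h : ℝ} (hh : 0 ≤ h) (A : Finset ℕ) (hA : ∀ n ∈ A, n ∈ almostPrimes k) :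
    ∑ n ∈ A, uh h n ≤ transSum (almostPrimes k) h := by
  have hs := uh_summable hk hh
  have := hs.sum_le_tsum (A.attach.map ⟨fun n => (⟨n.1, hA n.1 n.2⟩ : almostPrimes k), by
    intro a b h; exact Subtype.ext (congrArg (fun q : almostPrimes k => (q : ℕ)) h)⟩) (fun n _ => (uh_pos hh (two_le_ap hk n.2)).le)
  rw [Finset.sum_map] at this
  rw [← Finset.sum_attach A (fun n => uh h n)]
  exact this

lemma trans_le {k : ℕ} (hk : 1 ≤ k) {h C : ℝ} (hh : 0 ≤ h)
    (hC : ∀ A : Finset ℕ, (∀ n ∈ A, n ∈ almostPrimes k) → ∑ n ∈ A, uh h n ≤ C) :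
    transSum (almostPrimes k) h ≤ C := by
  rw [trans_eq]
  apply (uh_summable hk hh).tsum_le_of_sum_le
  intro s
  rw [← sum_image_val]
  apply hC
  intro n hn; obtain ⟨m, _, rfl⟩ := Finset.mem_image.mp hn; exact m.2

lemma log_ub {p m n : ℕ} (hp : 0 < p) (hm : 0 < m) (h : (p:ℝ) ^ m ≤ 2.718281828 ^ n) : log (p:ℝ) ≤ (n:ℝ) / m := by
  have hm' : (0:ℝ) < m := by exact_mod_cast hm
  rw [le_div_iff₀ hm', mul_comm, ← Real.log_pow]
  have h1 : (p:ℝ) ^ m ≤ exp n := by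
    refine h.trans ?_
    rw [← Real.exp_one_pow]
    have := Real.exp_one_gt_d9
    gcongr
    linarith
  calc _ ≤ log (exp n) := Real.log_le_log (by positivity) h1
    _ = n := Real.log_exp _

lemma uh_lb {p m n : ℕ} (hp : 2 ≤ p) (hm : 0 < m) (h : (p:ℝ) ^ m ≤ 2.718281828 ^ n) : 1 / ((p:ℝ) * ((n:ℝ) / m)) ≤ uh 0 p := by
  have := log_ub (by omega) hm h
  have h1 := log_pos_nat hp
  have : (0:ℝ) < p := by positivity
  unfold uh
  rw [add_zero]
  apply one_div_le_one_div_of_le (by positivity)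
  gcongr

lemma f1_lb : 1.36 < transSum (almostPrimes 1) 0 := by
  refine lt_of_lt_of_le ?_ (fin_le (k := 1) le_rfl (h := 0) le_rfl {2, 3, 5, 7, 11, 13, 17, 19, 23, 29, 31, 37, 41, 43, 47} ?_)
  · have h2 := uh_lb (p := 2) (n := 7) (m := 10) (by norm_num) (by norm_num) (by norm_num)
    have h3 := uh_lb (p := 3) (n := 11) (m := 10) (by norm_num) (by norm_num) (by norm_num)
    have h5 := uh_lb (p := 5) (n := 29) (m := 18) (by norm_num) (by norm_num) (by norm_num)
    have h7 := uh_lb (p := 7) (n := 37) (m := 19) (by norm_num) (by norm_num) (by norm_num)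
    have h11 := uh_lb (p := 11) (n := 12) (m := 5) (by norm_num) (by norm_num) (by norm_num)
    have h13 := uh_lb (p := 13) (n := 18) (m := 7) (by norm_num) (by norm_num) (by norm_num)
    have h17 := uh_lb (p := 17) (n := 17) (m := 6) (by norm_num) (by norm_num) (by norm_num)
    have h19 := uh_lb (p := 19) (n := 53) (m := 18) (by norm_num) (by norm_num) (by norm_num)
    have h23 := uh_lb (p := 23) (n := 22) (m := 7) (by norm_num) (by norm_num) (by norm_num)
    have h29 := uh_lb (p := 29) (n := 64) (m := 19) (by norm_num) (by norm_num) (by norm_num)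
    have h31 := uh_lb (p := 31) (n := 55) (m := 16) (by norm_num) (by norm_num) (by norm_num)
    have h37 := uh_lb (p := 37) (n := 65) (m := 18) (by norm_num) (by norm_num) (by norm_num)
    have h41 := uh_lb (p := 41) (n := 26) (m := 7) (by norm_num) (by norm_num) (by norm_num)
    have h43 := uh_lb (p := 43) (n := 64) (m := 17) (by norm_num) (by norm_num) (by norm_num)
    have h47 := uh_lb (p := 47) (n := 27) (m := 7) (by norm_num) (by norm_num) (by norm_num)
    norm_num at h2 h3 h5 h7 h11 h13 h17 h19 h23 h29 h31 h37 h41 h43 h47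
    repeat rw [Finset.sum_insert (by decide)]
    rw [Finset.sum_singleton]
    norm_num
    linarith
  · intro n hn
    rw [mem_ap_one]
    fin_cases hn <;> norm_num

lemma fk_zero {k : ℕ} (hk2 : 2 ≤ k) (hk : k ≤ 20) : transSum (almostPrimes k) 0 < transSum (almostPrimes 1) 0 := by
  have h1 : transSum (almostPrimes k) 0 ≤ 1.35 := by
    rw [trans_eq]
    exact ((uh_summable0 (by omega)).tsum_le_of_sum_le (uh0_sum_le (by omega))).trans (Bk_le hk2 hk)
  have := f1_lb
  norm_num at *
  linarith

lemma trans_cont {k : ℕ} (hk : 1 ≤ k) : ContinuousOn (fun h => transSum (almostPrimes k) h) (Set.Ici 0) := by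
  simp only [trans_eq]
  apply continuousOn_tsum (u := fun n : almostPrimes k => uh 0 n)
  · intro n
    have h1 := log_pos_nat (two_le_ap hk n.2)
    have h2 : (0:ℝ) < (n:ℕ) := by exact_mod_cast (by have := two_le_ap hk n.2; omega : 0 < (n:ℕ))
    unfold uh
    apply ContinuousOn.div (by fun_prop) (by fun_prop)
    intro x hx
    have hx' : 0 ≤ x := hx
    positivity
  · exact uh_summable0 hk
  · intro n x hx
    rw [Real.norm_of_nonneg (uh_pos hx (two_le_ap hk n.2)).le]
    exact uh_anti hx (two_le_ap hk n.2)

lemma big_primes (Y : ℕ) (C : ℝ) : ∃ T : Finset ℕ, (∀ p ∈ T, p.Prime ∧ Y < p) ∧ C < ∑ p ∈ T, 1 / (p:ℝ) := by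
  by_contra hcon
  push Not at hcon
  apply not_summable_one_div_on_primes
  apply summable_of_sum_le (c := C + (Y + 1))
  · intro n; apply Set.indicator_nonneg; intro x _; positivity
  · intro s
    have h1 : ∑ x ∈ s, Set.indicator {p : ℕ | p.Prime} (fun n : ℕ => 1 / (n:ℝ)) x = ∑ x ∈ s.filter Nat.Prime, 1 / (x:ℝ) := by
      rw [Finset.sum_filter]
      apply Finset.sum_congr rfl
      intro x _
      simp [Set.indicator_apply]
    rw [h1, ← Finset.sum_filter_add_sum_filter_not _ (fun p => Y < p)]
    have h2 := hcon ((s.filter Nat.Prime).filter (fun p => Y < p)) (by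
      intro p hp; simp at hp; exact ⟨hp.1.2, hp.2⟩)
    have h3 : ∑ x ∈ (s.filter Nat.Prime).filter (fun p => ¬ Y < p), 1 / (x:ℝ) ≤ (Y:ℝ) + 1 := by
      calc _ ≤ ∑ x ∈ (s.filter Nat.Prime).filter (fun p => ¬ Y < p), (1:ℝ) := by
            apply Finset.sum_le_sum
            intro x hx
            simp at hx
            have : (1:ℝ) ≤ x := by exact_mod_cast hx.1.2.one_le
            rw [div_le_one (by linarith)]; exact this
        _ ≤ ∑ x ∈ Finset.range (Y + 1), (1:ℝ) := by
            apply Finset.sum_le_sum_of_subset_of_nonneg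
            · intro x hx; simp at hx ⊢; omega
            · intros; norm_num
        _ = _ := by simp
    linarith

lemma large_h {k : ℕ} (hk2 : 2 ≤ k) : ∃ h : ℝ, 0 < h ∧ transSum (almostPrimes 1) h < transSum (almostPrimes k) h := by
  obtain ⟨A, hA, hAs⟩ := big_primes 0 (4 * 2 ^ (k - 2))
  obtain ⟨Y, hY⟩ : ∃ Y : ℕ, ∀ p ∈ A, p ≤ Y := ⟨A.sup id, fun p hp => Finset.le_sup (f := id) hp⟩
  obtain ⟨T, hT, hTs⟩ := big_primes Y (2 * ∑ p ∈ (Finset.range (Y + 1)).filter Nat.Prime, 1 / (p:ℝ))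
  obtain ⟨Z, hZ⟩ : ∃ Z : ℕ, ∀ p ∈ T, p ≤ Z := ⟨T.sup id, fun p hp => Finset.le_sup (f := id) hp⟩
  set c : ℕ := 2 ^ (k - 2) with hc
  have hc0 : 0 < c := by positivity
  set h : ℝ := (c * (Y + 1) * (Z + 1) : ℝ) with hh
  have hcR : (1:ℝ) ≤ c := by exact_mod_cast hc0
  have hY0 : (0:ℝ) ≤ Y := by positivity
  have hZ0 : (0:ℝ) ≤ Z := by positivity
  have hpos : 0 < h := by positivity
  have hcY : (c:ℝ) * (Y + 1) ≤ h := by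
    rw [hh]; nlinarith [mul_nonneg (mul_nonneg (by positivity : (0:ℝ) ≤ c) (by positivity : (0:ℝ) ≤ Y + 1)) hZ0]
  have hZh : (Z:ℝ) ≤ h := by
    rw [hh]
    have : (1:ℝ) ≤ c * (Y + 1) := by nlinarith
    nlinarith
  refine ⟨h, hpos, ?_⟩
  -- half of f_k dominates
  have key : ∀ B : Finset ℕ, (∀ q ∈ B, q.Prime ∧ Y < q) → 2 * ∑ q ∈ B, uh h q ≤ transSum (almostPrimes k) h := by
    intro B hB
    have hinj : Set.InjOn (fun x : ℕ × ℕ => c * x.1 * x.2) (A ×ˢ B : Finset (ℕ × ℕ)) := by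
      rintro ⟨p, q⟩ h1 ⟨p', q'⟩ h2 he
      simp only [Finset.coe_product, Set.mem_prod, Finset.mem_coe] at h1 h2
      simp only [mul_assoc] at he
      have he' : p * q = p' * q' := Nat.eq_of_mul_eq_mul_left hc0 he
      have hq := hB q h1.2
      have hq' := hB q' h2.2
      have hp' := hA p' h2.1
      have hd : q ∣ p' * q' := ⟨p, by rw [← he']; ring⟩
      have e : q = q' := by
        rcases (Nat.Prime.dvd_mul hq.1).mp hd with h3 | h3
        · have := (Nat.prime_dvd_prime_iff_eq hq.1 hp'.1).mp h3
          have := hY p' h2.1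
          omega
        · exact (Nat.prime_dvd_prime_iff_eq hq.1 hq'.1).mp h3
      subst e
      have := Nat.eq_of_mul_eq_mul_right hq.1.pos he'
      subst this; rfl
    have hmem : ∀ n ∈ (A ×ˢ B).image (fun x : ℕ × ℕ => c * x.1 * x.2), n ∈ almostPrimes k := by
      intro n hn
      obtain ⟨⟨p, q⟩, hx, rfl⟩ := Finset.mem_image.mp hn
      obtain ⟨hp, hq⟩ := Finset.mem_product.mp hx
      have hp := (hA p hp).1
      have hq := (hB q hq).1
      rw [mem_ap]
      refine ⟨mul_ne_zero (mul_ne_zero hc0.ne' hp.ne_zero) hq.ne_zero, ?_⟩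
      simp only
      rw [ArithmeticFunction.cardFactors_mul (mul_ne_zero hc0.ne' hp.ne_zero) hq.ne_zero,
        ArithmeticFunction.cardFactors_mul hc0.ne' hp.ne_zero, ArithmeticFunction.cardFactors_apply_prime hp,
        ArithmeticFunction.cardFactors_apply_prime hq, hc, ArithmeticFunction.cardFactors_apply_prime_pow Nat.prime_two]
      omega
    refine le_trans ?_ (fin_le (by omega) hpos.le _ hmem)
    rw [Finset.sum_image hinj, Finset.sum_product]
    have hterm : ∀ p ∈ A, ∀ q ∈ B, (1 / (p:ℝ)) * (uh h q / (2 * c)) ≤ uh h (c * p * q) := by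
      intro p hp q hq
      have hpY := hY p hp
      have hp := (hA p hp).1
      have hq := (hB q hq).1
      have hp0 : (0:ℝ) < p := by exact_mod_cast hp.pos
      have hq0 : (0:ℝ) < q := by exact_mod_cast hq.pos
      have hl := log_pos_nat hq.two_le
      have hlog : log ((c:ℝ) * p) ≤ h := by
        refine (Real.log_le_self (by positivity)).trans (le_trans ?_ hcY)
        gcongr
        have : (p:ℝ) ≤ Y := by exact_mod_cast hpY
        linarith
      have hl0 : 0 ≤ log ((c:ℝ) * p) := Real.log_nonneg (by
        have : (1:ℝ) ≤ p := by exact_mod_cast hp.one_le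
        nlinarith)
      unfold uh
      push_cast
      rw [Real.log_mul (by positivity) (by positivity)]
      rw [show (1 / (p:ℝ)) * (1 / ((q:ℝ) * (log q + h)) / (2 * c)) = 1 / ((c:ℝ) * p * q * (2 * (log q + h))) by field_simp]
      apply one_div_le_one_div_of_le (by positivity)
      gcongr
      linarith
    calc 2 * ∑ q ∈ B, uh h q = (4 * c) * ∑ q ∈ B, uh h q / (2 * c) := by
          rw [← Finset.sum_div]; field_simp; ring
      _ ≤ (∑ p ∈ A, 1 / (p:ℝ)) * ∑ q ∈ B, uh h q / (2 * c) := by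
          apply mul_le_mul_of_nonneg_right
          · rw [hc]; push_cast; exact hAs.le
          · apply Finset.sum_nonneg
            intro q hq
            have := uh_pos hpos.le (hB q hq).1.two_le
            positivity
      _ = ∑ p ∈ A, ∑ q ∈ B, (1 / (p:ℝ)) * (uh h q / (2 * c)) := by rw [Finset.sum_mul_sum]
      _ ≤ _ := Finset.sum_le_sum fun p hp => Finset.sum_le_sum fun q hq => hterm p hp q hq
  set R := ∑ p ∈ (Finset.range (Y + 1)).filter Nat.Prime, 1 / (p:ℝ) with hR
  have hsmall : ∑ p ∈ (Finset.range (Y + 1)).filter Nat.Prime, uh h p ≤ R / h := by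
    rw [hR, Finset.sum_div]
    apply Finset.sum_le_sum
    intro p hp
    simp at hp
    have := log_pos_nat hp.2.two_le
    have hp0 : (0:ℝ) < p := by exact_mod_cast hp.2.pos
    unfold uh
    rw [div_div]
    apply one_div_le_one_div_of_le (by positivity)
    gcongr
    linarith
  have hbig : R / h < ∑ q ∈ T, uh h q := by
    calc R / h < (∑ q ∈ T, 1 / (q:ℝ)) / (2 * h) := by
          rw [div_lt_div_iff₀ (by positivity) (by positivity)]
          nlinarith
      _ = ∑ q ∈ T, 1 / (q:ℝ) / (2 * h) := by rw [Finset.sum_div]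
      _ ≤ _ := by
          apply Finset.sum_le_sum
          intro q hq
          have hqp := (hT q hq).1
          have := log_pos_nat hqp.two_le
          have hp0 : (0:ℝ) < q := by exact_mod_cast hqp.pos
          have hqZ : (q:ℝ) ≤ Z := by exact_mod_cast hZ q hq
          have := Real.log_le_self hp0.le
          unfold uh
          rw [div_div]
          apply one_div_le_one_div_of_le (by positivity)
          gcongr
          linarith
  have hT' := key T hT
  have hf1 : transSum (almostPrimes 1) h ≤ R / h + transSum (almostPrimes k) h / 2 := by
    apply trans_le le_rfl hpos.le
    intro B hB
    rw [← Finset.sum_filter_add_sum_filter_not B (fun p => Y < p)]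
    have h1 := key (B.filter (fun p => Y < p)) (by
      intro p hp; simp at hp; exact ⟨mem_ap_one.mp (hB p hp.1), hp.2⟩)
    have h2 : ∑ q ∈ B.filter (fun p => ¬ Y < p), uh h q ≤ ∑ p ∈ (Finset.range (Y + 1)).filter Nat.Prime, uh h p := by
      apply Finset.sum_le_sum_of_subset_of_nonneg
      · intro p hp
        simp at hp ⊢
        exact ⟨by omega, mem_ap_one.mp (hB p hp.1)⟩
      · intro p hp _
        simp at hp
        exact (uh_pos hpos.le hp.2.two_le).le
    linarith
  linarith

def gp (n : ℕ) : ℕ := n.primeFactors.sup id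

lemma le_gp {n r : ℕ} (hn : n ≠ 0) (hr : r.Prime) (hd : r ∣ n) : r ≤ gp n :=
  Finset.le_sup (f := id) (Nat.mem_primeFactors.mpr ⟨hr, hd, hn⟩)

lemma gp_mem {n : ℕ} (hn : 2 ≤ n) : (gp n).Prime ∧ gp n ∣ n := by
  obtain ⟨p, hp, he⟩ := Finset.exists_mem_eq_sup n.primeFactors (Nat.nonempty_primeFactors.mpr (by omega)) id
  have : gp n = p := he
  rw [this]
  exact ⟨Nat.prime_of_mem_primeFactors hp, Nat.dvd_of_mem_primeFactors hp⟩

lemma gp_mul {m p : ℕ} (hm : m ≠ 0) (hp : p.Prime) (h : ∀ r, r.Prime → r ∣ m → r ≤ p) : gp (m * p) = p := by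
  have h2 : 2 ≤ m * p := le_trans hp.two_le (Nat.le_mul_of_pos_left p (Nat.pos_of_ne_zero hm))
  apply le_antisymm
  · obtain ⟨h3, h4⟩ := gp_mem h2
    rcases (Nat.Prime.dvd_mul h3).mp h4 with h5 | h5
    · exact h _ h3 h5
    · exact Nat.le_of_dvd hp.pos h5
  · exact le_gp (by omega) hp (dvd_mul_left _ _)

def gcnd (n p : ℕ) : Prop := ∀ r, r.Prime → r ∣ n / gp n → r ≤ p

open Classical in
noncomputable def sg (x : ℕ × ℕ) : ℕ × ℕ := if gcnd x.1 x.2 then (x.1 / gp x.1 * x.2, gp x.1) else x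

lemma sg_mem {k : ℕ} (hk : 1 ≤ k) {x : ℕ × ℕ} (h1 : x.1 ∈ almostPrimes k) (h2 : x.2 ∈ almostPrimes 1) :
    (sg x).1 ∈ almostPrimes k ∧ (sg x).2 ∈ almostPrimes 1 := by
  unfold sg
  split_ifs with hc
  · obtain ⟨hg, hd⟩ := gp_mem (two_le_ap hk h1)
    obtain ⟨m, hm⟩ := hd
    have hp := mem_ap_one.mp h2
    refine ⟨?_, mem_ap_one.mpr hg⟩
    obtain ⟨h0, h3⟩ := mem_ap.mp h1
    have e : x.1 / gp x.1 = m := Nat.div_eq_of_eq_mul_right hg.pos hm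
    have hm0 : m ≠ 0 := by rintro rfl; apply h0; rw [hm]; simp
    rw [hm, ArithmeticFunction.cardFactors_mul hg.ne_zero hm0, ArithmeticFunction.cardFactors_apply_prime hg] at h3
    rw [mem_ap]
    simp only [e]
    refine ⟨mul_ne_zero hm0 hp.ne_zero, ?_⟩
    rw [ArithmeticFunction.cardFactors_mul hm0 hp.ne_zero, ArithmeticFunction.cardFactors_apply_prime hp]
    omega
  · exact ⟨h1, h2⟩

lemma sg_inv {k : ℕ} (hk : 1 ≤ k) {x : ℕ × ℕ} (h1 : x.1 ∈ almostPrimes k) (h2 : x.2 ∈ almostPrimes 1) :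
    sg (sg x) = x := by
  by_cases hc : gcnd x.1 x.2
  · have e1 : sg x = (x.1 / gp x.1 * x.2, gp x.1) := by unfold sg; rw [if_pos hc]
    obtain ⟨hg, hd⟩ := gp_mem (two_le_ap hk h1)
    have hp := mem_ap_one.mp h2
    have hx0 : x.1 ≠ 0 := (mem_ap.mp h1).1
    set m := x.1 / gp x.1 with hm
    have hmx : m * gp x.1 = x.1 := Nat.div_mul_cancel hd
    have hm0 : m ≠ 0 := by intro h; rw [h] at hmx; omega
    have e2 : gp (m * x.2) = x.2 := gp_mul hm0 hp hc
    have e3 : m * x.2 / x.2 = m := Nat.mul_div_cancel _ hp.pos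
    rw [e1]
    unfold sg
    simp only [e2, e3]
    rw [if_pos]
    · rw [hmx]
    · intro r hr hrd
      simp only [e2, e3] at hrd
      exact le_gp hx0 hr (hrd.trans ⟨_, hmx.symm⟩)
  · have e1 : sg x = x := by unfold sg; rw [if_neg hc]
    rw [e1, e1]

noncomputable def sgE {k : ℕ} (hk : 1 ≤ k) : (almostPrimes k × almostPrimes 1) ≃ (almostPrimes k × almostPrimes 1) where
  toFun x := (⟨(sg (x.1.1, x.2.1)).1, (sg_mem hk x.1.2 x.2.2).1⟩, ⟨(sg (x.1.1, x.2.1)).2, (sg_mem hk x.1.2 x.2.2).2⟩)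
  invFun x := (⟨(sg (x.1.1, x.2.1)).1, (sg_mem hk x.1.2 x.2.2).1⟩, ⟨(sg (x.1.1, x.2.1)).2, (sg_mem hk x.1.2 x.2.2).2⟩)
  left_inv x := by
    have := sg_inv (x := (x.1.1, x.2.1)) hk x.1.2 x.2.2
    apply Prod.ext <;> apply Subtype.ext <;> simp [this]
  right_inv x := by
    have := sg_inv (x := (x.1.1, x.2.1)) hk x.1.2 x.2.2
    apply Prod.ext <;> apply Subtype.ext <;> simp [this]

noncomputable def tt (h h' : ℝ) (n p : ℕ) : ℝ := uh h' n * uh h p - uh h n * uh h' p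

lemma tt_pos {h h' : ℝ} (hh : 0 ≤ h) (hlt : h < h') {n p : ℕ} (hp : 2 ≤ p) (hpn : p < n) : 0 < tt h h' n p := by
  have l1 := log_pos_nat hp
  have l2 : log (p:ℝ) < log n := Real.log_lt_log (by positivity) (by exact_mod_cast hpn)
  have hn0 : (0:ℝ) < n := by exact_mod_cast (by omega : 0 < n)
  have hp0 : (0:ℝ) < p := by positivity
  unfold tt uh
  generalize log (p:ℝ) = P at *
  generalize log (n:ℝ) = N at *
  have hN : 0 < N := by linarith
  have hh' : 0 < h' := by linarith
  have e : 1 / ((n:ℝ) * (N + h')) * (1 / ((p:ℝ) * (P + h))) - 1 / ((n:ℝ) * (N + h)) * (1 / ((p:ℝ) * (P + h'))) =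
      (h' - h) * (N - P) / ((n:ℝ) * p * ((N + h') * (P + h) * ((N + h) * (P + h')))) := by
    have : 0 < P + h := by linarith
    have : 0 < N + h := by linarith
    field_simp
    ring
  rw [e]
  have : 0 < h' - h := by linarith
  have : 0 < N - P := by linarith
  positivity

lemma pair_aux {h h' M P Q : ℝ} (hh : 0 ≤ h) (hlt : h < h') (hM : 0 < M) (hP : 0 < P) (hPQ : P ≤ Q) :
    0 < 1 / ((M + Q + h') * (P + h)) - 1 / ((M + Q + h) * (P + h')) + (1 / ((M + P + h') * (Q + h)) - 1 / ((M + P + h) * (Q + h'))) := by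
  have hQ : 0 < Q := by linarith
  have hh' : 0 < h' := by linarith
  have e : ∀ X Y : ℝ, 0 < X → 0 < Y → 1 / ((X + h') * (Y + h)) - 1 / ((X + h) * (Y + h')) =
      (h' - h) * (X - Y) * (1 / ((X + h) * (Y + h) * ((X + h') * (Y + h')))) := by
    intro X Y hX hY
    have : 0 < X + h := by linarith
    have : 0 < Y + h := by linarith
    field_simp
    ring
  rw [e _ _ (by linarith) hP, e _ _ (by linarith) hQ]
  have hAB : 1 / ((M + P + h) * (Q + h) * ((M + P + h') * (Q + h'))) ≤ 1 / ((M + Q + h) * (P + h) * ((M + Q + h') * (P + h'))) := by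
    apply one_div_le_one_div_of_le (by positivity)
    have : 0 ≤ M * (Q - P) := mul_nonneg hM.le (by linarith)
    apply mul_le_mul
    · nlinarith
    · nlinarith
    · positivity
    · positivity
  have hB : 0 < 1 / ((M + P + h) * (Q + h) * ((M + P + h') * (Q + h'))) := by positivity
  generalize 1 / ((M + P + h) * (Q + h) * ((M + P + h') * (Q + h'))) = B at *
  generalize 1 / ((M + Q + h) * (P + h) * ((M + Q + h') * (P + h'))) = A at *
  have h1 : 0 < (M + Q - P) * A + (M + P - Q) * B := by nlinarith
  have := mul_pos (sub_pos.mpr hlt) h1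
  nlinarith

lemma tt_eq {h h' : ℝ} {m p q : ℕ} (hm : 2 ≤ m) (hp : 2 ≤ p) (hq : 2 ≤ q) :
    tt h h' (m * q) p = 1 / ((m:ℝ) * p * q) *
      (1 / ((log m + log q + h') * (log p + h)) - 1 / ((log m + log q + h) * (log p + h'))) := by
  unfold tt uh
  push_cast
  rw [Real.log_mul (by positivity) (by positivity), mul_sub]
  simp only [one_div, ← mul_inv]
  congr 2 <;> ring

lemma tt_pair {h h' : ℝ} (hh : 0 ≤ h) (hlt : h < h') {m p q : ℕ} (hm : 2 ≤ m) (hp : 2 ≤ p) (hq : 2 ≤ q) :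
    0 < tt h h' (m * q) p + tt h h' (m * p) q := by
  rw [tt_eq hm hp hq, tt_eq hm hq hp, mul_right_comm (m:ℝ) q p, ← mul_add]
  apply mul_pos (by positivity)
  have l1 := log_pos_nat hp
  have l2 := log_pos_nat hq
  have l3 := log_pos_nat hm
  rcases le_total (log (p:ℝ)) (log q) with h1 | h1
  · exact pair_aux hh hlt l3 l1 h1
  · have := pair_aux hh hlt l3 l2 h1
    linarith

lemma term_pos {k : ℕ} (hk : 2 ≤ k) {h h' : ℝ} (hh : 0 ≤ h) (hlt : h < h') {n p : ℕ} (hn : n ∈ almostPrimes k) (hp : p ∈ almostPrimes 1) :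
    0 < tt h h' n p + tt h h' (sg (n, p)).1 (sg (n, p)).2 := by
  have hpp := mem_ap_one.mp hp
  obtain ⟨hg, hd⟩ := gp_mem (two_le_ap (by omega) hn)
  have hmx : n / gp n * gp n = n := Nat.div_mul_cancel hd
  have hm2 : 2 ≤ n / gp n := by
    obtain ⟨h0, h3⟩ := mem_ap.mp hn
    have hm0 : n / gp n ≠ 0 := by intro h; rw [h] at hmx; omega
    rw [← hmx, ArithmeticFunction.cardFactors_mul hm0 hg.ne_zero, ArithmeticFunction.cardFactors_apply_prime hg] at h3
    by_contra hlt2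
    have hm0p : 0 < n / gp n := Nat.pos_of_ne_zero hm0
    have : n / gp n = 1 := by omega
    rw [this] at h3
    simp at h3
    omega
  by_cases hc : gcnd n p
  · have e1 : sg (n, p) = (n / gp n * p, gp n) := by unfold sg; rw [if_pos hc]
    rw [e1]
    have := tt_pair hh hlt hm2 hpp.two_le hg.two_le
    rw [hmx] at this
    exact this
  · have e1 : sg (n, p) = (n, p) := by unfold sg; rw [if_neg hc]
    rw [e1]
    unfold gcnd at hc
    push Not at hc
    obtain ⟨r, hr, hrd, hlt'⟩ := hc
    have : r ≤ n := Nat.le_of_dvd (by have := (mem_ap.mp hn).1; omega) (hrd.trans ⟨_, hmx.symm⟩)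
    have := tt_pos hh hlt hpp.two_le (show p < n by omega)
    simp only
    linarith

lemma ap_nonempty (k : ℕ) : Nonempty (almostPrimes k × almostPrimes 1) :=
  ⟨(⟨2 ^ k, mem_ap.mpr ⟨by positivity, ArithmeticFunction.cardFactors_apply_prime_pow Nat.prime_two⟩⟩, ⟨2, mem_ap_one.mpr Nat.prime_two⟩)⟩

set_option maxHeartbeats 1000000 in
lemma ratio_mono {k : ℕ} (hk : 2 ≤ k) {h h' : ℝ} (hh : 0 ≤ h) (hlt : h < h') :
    transSum (almostPrimes k) h * transSum (almostPrimes 1) h' < transSum (almostPrimes k) h' * transSum (almostPrimes 1) h := by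
  have hh' : 0 ≤ h' := by linarith
  have hk1 : 1 ≤ k := by omega
  have nn : ∀ {a : ℝ} {j : ℕ}, 0 ≤ a → 1 ≤ j → ∀ n : almostPrimes j, 0 ≤ uh a n := fun ha hj n => (uh_pos ha (two_le_ap hj n.2)).le
  have s1 : Summable (fun x : almostPrimes k × almostPrimes 1 => uh h' x.1 * uh h x.2) :=
    (uh_summable hk1 hh').mul_of_nonneg (uh_summable le_rfl hh) (nn hh' hk1) (nn hh le_rfl)
  have s2 : Summable (fun x : almostPrimes k × almostPrimes 1 => uh h x.1 * uh h' x.2) :=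
    (uh_summable hk1 hh).mul_of_nonneg (uh_summable le_rfl hh') (nn hh hk1) (nn hh' le_rfl)
  have e1 : transSum (almostPrimes k) h' * transSum (almostPrimes 1) h = ∑' x : almostPrimes k × almostPrimes 1, uh h' x.1 * uh h x.2 := by
    rw [trans_eq, trans_eq]
    exact (uh_summable hk1 hh').tsum_mul_tsum (uh_summable le_rfl hh) s1
  have e2 : transSum (almostPrimes k) h * transSum (almostPrimes 1) h' = ∑' x : almostPrimes k × almostPrimes 1, uh h x.1 * uh h' x.2 := by
    rw [trans_eq, trans_eq]
    exact (uh_summable hk1 hh).tsum_mul_tsum (uh_summable le_rfl hh') s2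
  have s3 : Summable (fun x : almostPrimes k × almostPrimes 1 => tt h h' x.1 x.2) := s1.sub s2
  have e3 : ∑' x : almostPrimes k × almostPrimes 1, tt h h' x.1 x.2 =
      transSum (almostPrimes k) h' * transSum (almostPrimes 1) h - transSum (almostPrimes k) h * transSum (almostPrimes 1) h' := by
    rw [e1, e2]; exact s1.tsum_sub s2
  have s4 : Summable (fun x => tt h h' (sgE hk1 x).1 (sgE hk1 x).2) := (sgE hk1).summable_iff.mpr s3
  have e4 : ∑' x, tt h h' (sgE hk1 x).1 (sgE hk1 x).2 = ∑' x : almostPrimes k × almostPrimes 1, tt h h' x.1 x.2 :=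
    (sgE hk1).tsum_eq (fun x : almostPrimes k × almostPrimes 1 => tt h h' x.1 x.2)
  have hpos : 0 < ∑' x : almostPrimes k × almostPrimes 1, (tt h h' x.1 x.2 + tt h h' (sgE hk1 x).1 (sgE hk1 x).2) := by
    have hp : ∀ x : almostPrimes k × almostPrimes 1, 0 < tt h h' x.1 x.2 + tt h h' (sgE hk1 x).1 (sgE hk1 x).2 :=
      fun x => term_pos hk hh hlt x.1.2 x.2.2
    obtain ⟨x0⟩ := ap_nonempty k
    exact (s3.add s4).tsum_pos (fun x => (hp x).le) x0 (hp x0)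
  rw [s3.tsum_add s4, e4, e3] at hpos
  linarith

lemma f1_pos {h : ℝ} (hh : 0 ≤ h) : 0 < transSum (almostPrimes 1) h := by
  rw [trans_eq]
  exact (uh_summable le_rfl hh).tsum_pos (fun x => (uh_pos hh (two_le_ap le_rfl x.2)).le) ⟨2, mem_ap_one.mpr Nat.prime_two⟩ (uh_pos hh le_rfl)

/-- For `2 ≤ k ≤ 20` there is a unique real `h_k > 0` with
`f(N_k,h_k) = f(N₁,h_k)`; moreover `f(N_k,h) < f(N₁,h)` for `0 ≤ h < h_k`
and `f(N_k,h) > f(N₁,h)` for `h > h_k`. -/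
theorem stmt_9 (k : ℕ) (hk2 : 2 ≤ k) (hk20 : k ≤ 20) :
    (∃! hk : ℝ, 0 < hk ∧
      transSum (almostPrimes k) hk = transSum (almostPrimes 1) hk) ∧
    (∀ hk : ℝ, 0 < hk →
      transSum (almostPrimes k) hk = transSum (almostPrimes 1) hk →
      (∀ h : ℝ, 0 ≤ h → h < hk →
        transSum (almostPrimes k) h < transSum (almostPrimes 1) h) ∧
      (∀ h : ℝ, hk < h →
        transSum (almostPrimes 1) h < transSum (almostPrimes k) h)) := by
  have main : ∀ hk : ℝ, 0 < hk →
      transSum (almostPrimes k) hk = transSum (almostPrimes 1) hk →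
      (∀ h : ℝ, 0 ≤ h → h < hk →
        transSum (almostPrimes k) h < transSum (almostPrimes 1) h) ∧
      (∀ h : ℝ, hk < h →
        transSum (almostPrimes 1) h < transSum (almostPrimes k) h) := by
    intro a ha he
    have hp := f1_pos ha.le
    constructor
    · intro h hh hlt
      have := ratio_mono hk2 hh hlt
      rw [he, mul_comm (transSum (almostPrimes 1) a)] at this
      exact lt_of_mul_lt_mul_right this hp.le
    · intro h hlt
      have := ratio_mono hk2 ha.le hlt
      rw [he, mul_comm (transSum (almostPrimes 1) a)] at this
      exact lt_of_mul_lt_mul_right this hp.le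
  refine ⟨?_, main⟩
  obtain ⟨b, hb, hbl⟩ := large_h hk2
  have h0 := fk_zero hk2 hk20
  have hcont : ContinuousOn (fun h => transSum (almostPrimes k) h - transSum (almostPrimes 1) h) (Set.Icc 0 b) :=
    ((trans_cont (by omega)).sub (trans_cont le_rfl)).mono Set.Icc_subset_Ici_self
  obtain ⟨a, ha, hae⟩ := intermediate_value_Ioo hb.le hcont (show (0:ℝ) ∈ Set.Ioo _ _ from ⟨by linarith, by linarith⟩)
  have hae' : transSum (almostPrimes k) a = transSum (almostPrimes 1) a := sub_eq_zero.mp hae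
  refine ⟨a, ⟨ha.1, hae'⟩, ?_⟩
  rintro c ⟨hc, hce⟩
  rcases lt_trichotomy c a with h | h | h
  · exact absurd hce ((main a ha.1 hae').1 c hc.le h).ne
  · exact h
  · exact absurd hce ((main a ha.1 hae').2 c h).ne'
end

section
/- For every integer k ≥ 2 and every real s > 1 such that P_{k−1}(s) > 1, one has P_k′(s) < P′(s) < 0, where P′ and P_k′ denote the derivatives of the prime zeta function P and of P_k respectively. -/
open MeasureTheory Real

lemma aux_summable_log (a : ℝ) (ha : 1 < a) :
    Summable (fun n : ℕ => Real.log n * (n : ℝ) ^ (-a)) := by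
  obtain ⟨b, hb1, hba⟩ := exists_between ha
  have hS : Summable (fun n : ℕ => (1 / (a - b)) * (n : ℝ) ^ (-b)) :=
    (Real.summable_nat_rpow.2 (by linarith)).mul_left _
  refine Summable.of_nonneg_of_le (fun n => ?_) (fun n => ?_) hS
  · exact mul_nonneg (Real.log_natCast_nonneg n) (Real.rpow_nonneg (Nat.cast_nonneg n) _)
  · rcases Nat.eq_zero_or_pos n with h | h
    · subst h
      simp
      exact mul_nonneg (by simp; linarith) (Real.rpow_nonneg le_rfl _)
    · have hn : (0 : ℝ) < n := by exact_mod_cast h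
      have h1 := Real.log_natCast_le_rpow_div n (ε := a - b) (by linarith)
      calc Real.log n * (n : ℝ) ^ (-a) ≤ ((n : ℝ) ^ (a - b) / (a - b)) * (n : ℝ) ^ (-a) := by
            gcongr
        _ = (1 / (a - b)) * ((n : ℝ) ^ (a - b) * (n : ℝ) ^ (-a)) := by ring
        _ = _ := by
          rw [← Real.rpow_add hn]
          congr 2
          ring

lemma aux_deriv (A : Set ℕ) (hA : ∀ n ∈ A, 0 < n) (s : ℝ) (hs : 1 < s) :
    HasDerivAt (fun t : ℝ => ∑' n : A, (n.1 : ℝ) ^ (-t))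
      (∑' n : A, -(Real.log n.1 * (n.1 : ℝ) ^ (-s))) s := by
  obtain ⟨a, ha1, has⟩ := exists_between hs
  have hu : Summable (fun n : A => Real.log n.1 * (n.1 : ℝ) ^ (-a)) :=
    (aux_summable_log a ha1).subtype A
  refine hasDerivAt_tsum_of_isPreconnected (t := Set.Ioi a) (y₀ := s)
    (g := fun (n : A) t => (n.1 : ℝ) ^ (-t))
    (g' := fun (n : A) t => -(Real.log n.1 * (n.1 : ℝ) ^ (-t)))
    hu isOpen_Ioi isPreconnected_Ioi ?_ ?_ has ?_ has
  · intro n y _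
    have hn : (0 : ℝ) < n.1 := by exact_mod_cast hA n.1 n.2
    have h0 : HasDerivAt (fun t : ℝ => -t) (-1) y := (hasDerivAt_id y).neg
    have := h0.const_rpow hn
    have e : Real.log (n.1 : ℝ) * (-1) * (n.1 : ℝ) ^ (-y)
        = -(Real.log n.1 * (n.1 : ℝ) ^ (-y)) := by ring
    rw [e] at this
    exact this
  · intro n y hy
    have hn : (1 : ℝ) ≤ n.1 := by exact_mod_cast hA n.1 n.2
    rw [norm_neg, Real.norm_of_nonneg (mul_nonneg (Real.log_nonneg hn) (by positivity))]
    have hy' : a < y := hy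
    exact mul_le_mul_of_nonneg_left (Real.rpow_le_rpow_of_exponent_le hn (by linarith))
      (Real.log_nonneg hn)
  · exact (Real.summable_nat_rpow.2 (by linarith : -s < -1)).subtype A

lemma aux_log (n : ℕ) (hn : 0 < n) : ∑ p ∈ n.primeFactors, Real.log p ≤ Real.log n := by
  rw [← Real.log_prod (fun p hp => by
    exact_mod_cast (Nat.prime_of_mem_primeFactors hp).ne_zero)]
  apply Real.log_le_log
  · exact Finset.prod_pos fun p hp => by
      exact_mod_cast (Nat.prime_of_mem_primeFactors hp).pos
  · have := Nat.le_of_dvd hn (Nat.prod_primeFactors_dvd n)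
    calc (∏ p ∈ n.primeFactors, (p : ℝ)) = ((∏ p ∈ n.primeFactors, p : ℕ) : ℝ) := by push_cast; rfl
      _ ≤ n := by exact_mod_cast this

lemma aux_mem (k : ℕ) (p m : ℕ) (hp : p.Prime) (hm : m ∈ almostPrimes k) :
    p * m ∈ almostPrimes (k + 1) := by
  obtain ⟨h0, hl⟩ := hm
  refine ⟨Nat.mul_pos hp.pos h0, ?_⟩
  rw [(Nat.perm_primeFactorsList_mul hp.ne_zero h0.ne').length_eq, List.length_append,
    Nat.primeFactorsList_prime hp, hl]
  simp [add_comm]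

lemma aux_ineq (k : ℕ) (s : ℝ) (hs : 1 < s) :
    (∑' p : Nat.Primes, Real.log p.1 * (p.1 : ℝ) ^ (-s)) * Pk k s
      ≤ ∑' n : almostPrimes (k + 1), Real.log n.1 * (n.1 : ℝ) ^ (-s) := by
  classical
  have h1 : Summable (fun p : Nat.Primes => Real.log p.1 * (p.1 : ℝ) ^ (-s)) :=
    (aux_summable_log s hs).subtype {p | p.Prime}
  have h2 : Summable (fun n : almostPrimes k => (n.1 : ℝ) ^ (-s)) :=
    (Real.summable_nat_rpow.2 (by linarith : -s < -1)).subtype _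
  have h3 : Summable (fun n : almostPrimes (k+1) => Real.log n.1 * (n.1 : ℝ) ^ (-s)) :=
    (aux_summable_log s hs).subtype _
  have n1 : ∀ p : Nat.Primes, 0 ≤ Real.log p.1 * (p.1 : ℝ) ^ (-s) := fun p =>
    mul_nonneg (Real.log_natCast_nonneg _) (by positivity)
  have n2 : ∀ n : almostPrimes k, 0 ≤ (n.1 : ℝ) ^ (-s) := fun p => by positivity
  have h12 := h1.mul_of_nonneg h2 n1 n2
  unfold Pk
  rw [h1.tsum_mul_tsum h2 h12]
  refine Real.tsum_le_of_sum_le (fun x => mul_nonneg (n1 _) (n2 _)) (fun F => ?_)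
  let g : Nat.Primes × almostPrimes k → almostPrimes (k+1) :=
    fun x => ⟨x.1.1 * x.2.1, aux_mem k _ _ x.1.2 x.2.2⟩
  rw [← Finset.sum_fiberwise_of_maps_to (g := g) (t := F.image g)
    (fun x hx => Finset.mem_image_of_mem g hx)]
  refine le_trans (Finset.sum_le_sum (g := fun n : almostPrimes (k+1) =>
    Real.log n.1 * (n.1 : ℝ) ^ (-s)) fun n _ => ?_) (h3.sum_le_tsum _ fun n _ =>
      mul_nonneg (Real.log_natCast_nonneg _) (by positivity))
  have hn : 0 < n.1 := n.2.1
  have e : ∀ x ∈ F.filter (fun x => g x = n),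
      Real.log x.1.1 * (x.1.1 : ℝ) ^ (-s) * (x.2.1 : ℝ) ^ (-s)
        = Real.log x.1.1 * (n.1 : ℝ) ^ (-s) := by
    intro x hx
    have hx' := (Finset.mem_filter.1 hx).2
    rw [← hx', mul_assoc, ← Real.mul_rpow (by positivity) (by positivity)]
    simp [g]
  rw [Finset.sum_congr rfl e, ← Finset.sum_mul]
  refine mul_le_mul_of_nonneg_right (le_trans ?_ (aux_log n.1 hn)) (by positivity)
  have inj : Set.InjOn (fun x : Nat.Primes × almostPrimes k => x.1.1)
      (F.filter (fun x => g x = n) : Finset _) := by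
    intro x hx y hy hxy
    have hx' := congrArg Subtype.val (Finset.mem_filter.1 hx).2
    have hy' := congrArg Subtype.val (Finset.mem_filter.1 hy).2
    simp only [g] at hx' hy' hxy
    have hp : x.1 = y.1 := Subtype.ext hxy
    refine Prod.ext hp (Subtype.ext ?_)
    have : x.1.1 * x.2.1 = x.1.1 * y.2.1 := by rw [hx', hxy, hy']
    exact Nat.eq_of_mul_eq_mul_left x.1.2.pos this
  rw [← Finset.sum_image (f := fun q : ℕ => Real.log q) inj]
  refine Finset.sum_le_sum_of_subset_of_nonneg ?_ (fun q _ _ => Real.log_natCast_nonneg q)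
  intro q hq
  obtain ⟨x, hx, rfl⟩ := Finset.mem_image.1 hq
  have hx' := congrArg Subtype.val (Finset.mem_filter.1 hx).2
  exact Nat.mem_primeFactors.2 ⟨x.1.2, ⟨x.2.1, hx'.symm⟩, hn.ne'⟩

/-- For every `k ≥ 2` and real `s > 1` with `P_{k−1}(s) > 1`, one has
`P_k′(s) < P′(s) < 0`. -/
theorem stmt_11 (k : ℕ) (hk : 2 ≤ k) (s : ℝ) (hs : 1 < s)
    (hP : 1 < Pk (k - 1) s) :
    deriv (Pk k) s < deriv primeZeta s ∧ deriv primeZeta s < 0 := by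
  obtain ⟨j, rfl⟩ : ∃ j, k = j + 1 := ⟨k - 1, by omega⟩
  rw [Nat.add_sub_cancel] at hP
  have d1 : deriv (Pk (j+1)) s
      = ∑' n : almostPrimes (j+1), -(Real.log n.1 * (n.1 : ℝ) ^ (-s)) :=
    (aux_deriv (almostPrimes (j+1)) (fun n hn => hn.1) s hs).deriv
  have d2 : deriv primeZeta s
      = ∑' p : Nat.Primes, -(Real.log p.1 * (p.1 : ℝ) ^ (-s)) :=
    (aux_deriv {p | p.Prime} (fun n hn => Nat.Prime.pos hn) s hs).deriv
  rw [tsum_neg] at d1 d2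
  have h1 : Summable (fun p : Nat.Primes => Real.log p.1 * (p.1 : ℝ) ^ (-s)) :=
    (aux_summable_log s hs).subtype {p | p.Prime}
  have hpos : 0 < ∑' p : Nat.Primes, Real.log p.1 * (p.1 : ℝ) ^ (-s) := by
    refine h1.tsum_pos (fun p => mul_nonneg (Real.log_natCast_nonneg _) (by positivity))
      ⟨2, Nat.prime_two⟩ ?_
    exact mul_pos (Real.log_pos (by norm_num)) (by positivity)
  have := aux_ineq j s hs
  rw [d1, d2]
  constructor
  · nlinarith
  · linarith
end

section
/- For every integer k ≥ 2, the function s ↦ P_k(s)/(2^{−s} + 3^{−s}) is strictly decreasing on (1, ∞). -/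
open MeasureTheory Real

lemma aux_ge (k : ℕ) (hk : 2 ≤ k) (n : ℕ) (h : n ∈ almostPrimes k) : 4 ≤ n := by
  obtain ⟨h0, h1⟩ := h
  by_contra hn
  have : n < 4 := by omega
  interval_cases n
  · simp at h1; omega
  · rw [Nat.primeFactorsList_prime Nat.prime_two] at h1; simp at h1; omega
  · rw [Nat.primeFactorsList_prime Nat.prime_three] at h1; simp at h1; omega

lemma aux_lt (n : ℕ) (hn : 4 ≤ n) (a b : ℝ) (hab : a < b) :
    (n : ℝ) ^ (-b) / ((2 : ℝ) ^ (-b) + (3 : ℝ) ^ (-b)) <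
    (n : ℝ) ^ (-a) / ((2 : ℝ) ^ (-a) + (3 : ℝ) ^ (-a)) := by
  have hn' : (4 : ℝ) ≤ n := by exact_mod_cast hn
  have key : ∀ m : ℝ, 0 < m → m < n →
      (n : ℝ) ^ (-b) * m ^ (-a) < (n : ℝ) ^ (-a) * m ^ (-b) := by
    intro m hm hmn
    have h1 : (n : ℝ) ^ (-b) = (n : ℝ) ^ (-a) * (n : ℝ) ^ (-(b - a)) := by
      rw [← Real.rpow_add (by linarith)]; congr 1; ring
    have h2 : m ^ (-b) = m ^ (-a) * m ^ (-(b - a)) := by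
      rw [← Real.rpow_add hm]; congr 1; ring
    have h3 : (n : ℝ) ^ (-(b - a)) < m ^ (-(b - a)) :=
      Real.rpow_lt_rpow_of_neg hm hmn (by linarith)
    have h4 : 0 < (n : ℝ) ^ (-a) * m ^ (-a) := by
      have := Real.rpow_pos_of_pos hm (-a)
      have := Real.rpow_pos_of_pos (show (0 : ℝ) < n by linarith) (-a)
      positivity
    rw [h1, h2]
    nlinarith [mul_lt_mul_of_pos_left h3 h4]
  rw [div_lt_div_iff₀ (by positivity) (by positivity)]
  have := key 2 (by norm_num) (by linarith)
  have := key 3 (by norm_num) (by linarith)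
  linarith

/-- For every `k ≥ 2`, the function `s ↦ P_k(s)/(2^{−s} + 3^{−s})` is
strictly decreasing on `(1, ∞)`. -/
theorem stmt_13 (k : ℕ) (hk : 2 ≤ k) :
    StrictAntiOn (fun s : ℝ => Pk k s / ((2 : ℝ) ^ (-s) + (3 : ℝ) ^ (-s))) (Set.Ioi 1) := by
  intro a ha b hb hab
  simp only [Set.mem_Ioi] at ha hb
  have hs : ∀ s : ℝ, 1 < s → Summable (fun n : almostPrimes k => (n.1 : ℝ) ^ (-s) /
      ((2 : ℝ) ^ (-s) + (3 : ℝ) ^ (-s))) := by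
    intro s hs
    have h : Summable (fun n : ℕ => (n : ℝ) ^ (-s)) :=
      Real.summable_nat_rpow.2 (by linarith)
    exact (h.subtype (almostPrimes k)).div_const _
  have hmem : 2 ^ k ∈ almostPrimes k := by
    refine ⟨by positivity, ?_⟩
    rw [Nat.Prime.primeFactorsList_pow Nat.prime_two]
    simp
  simp only [Pk]
  rw [← tsum_div_const, ← tsum_div_const]
  exact Summable.tsum_lt_tsum (i := ⟨2 ^ k, hmem⟩)
    (fun n => (aux_lt n.1 (aux_ge k hk n.1 n.2) a b hab).le)
    (aux_lt _ (aux_ge k hk _ hmem) a b hab) (hs b hb) (hs a ha)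
end

section
/- Let k ≥ 2 be an integer and let σ > 1 be a real number such that P_k(s) > P(s) for all s with 1 < s < σ and P_k(s) < P(s) for all s > σ. Then the function h ↦ e^{(σ−1)h} (f(N_k, h) − f(N₁, h)) is strictly increasing on [0, ∞). -/
open MeasureTheory Real

/-- twisted completely multiplicative function -/
noncomputable def twist (z : ℝ) (s : ℝ) (hs : s ≠ 0) : ℕ →*₀ ℝ where
  toFun n := z ^ (ArithmeticFunction.cardFactors n) * (n : ℝ) ^ (-s)
  map_zero' := by
    have : (0 : ℝ) ^ (-s) = 0 := Real.zero_rpow (neg_ne_zero.2 hs)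
    simp [this]
  map_one' := by simp
  map_mul' m n := by
    have h0 : (0 : ℝ) ^ (-s) = 0 := Real.zero_rpow (neg_ne_zero.2 hs)
    rcases eq_or_ne m 0 with rfl | hm
    · simp [h0]
    rcases eq_or_ne n 0 with rfl | hn
    · simp [h0]
    rw [ArithmeticFunction.cardFactors_mul hm hn, pow_add, Nat.cast_mul,
      Real.mul_rpow (Nat.cast_nonneg _) (Nat.cast_nonneg _)]
    ring

lemma twist_apply (z s : ℝ) (hs : s ≠ 0) (n : ℕ) :
    twist z s hs n = z ^ (ArithmeticFunction.cardFactors n) * (n : ℝ) ^ (-s) := rfl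

lemma summable_neg (s : ℝ) (hs : 1 < s) : Summable (fun n : ℕ => (n : ℝ) ^ (-s)) :=
  Real.summable_nat_rpow.2 (by linarith)

lemma summable_twist (z s : ℝ) (hs0 : s ≠ 0) (hs : 1 < s) (hz : 0 ≤ z) (hz1 : z ≤ 1) :
    Summable (fun n => ‖twist z s hs0 n‖) := by
  refine Summable.of_nonneg_of_le (fun _ => norm_nonneg _) (fun n => ?_) (summable_neg s hs)
  rw [twist_apply, Real.norm_of_nonneg (by positivity)]
  exact mul_le_of_le_one_left (by positivity) (pow_le_one₀ hz hz1)

lemma twist_sq_le (s : ℝ) (hs0 : s ≠ 0) (hs : 1 < s) :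
    (∑' n, twist (1/2) s hs0 n) * (∑' n, twist (1/2) s hs0 n) ≤ ∑' n, twist 1 s hs0 n := by
  have A := EulerProduct.eulerProduct_completely_multiplicative_hasProd
    (summable_twist (1/2) s hs0 hs (by norm_num) (by norm_num))
  have B := EulerProduct.eulerProduct_completely_multiplicative_hasProd
    (summable_twist 1 s hs0 hs (by norm_num) (by norm_num))
  refine le_of_tendsto_of_tendsto' (A.mul A) B fun u => ?_
  have key : ∀ p : Nat.Primes, (p.1 : ℝ) ^ (-s) < 1 := fun p =>
    Real.rpow_lt_one_of_one_lt_of_neg (by exact_mod_cast p.2.one_lt) (by linarith)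
  have key0 : ∀ p : Nat.Primes, 0 ≤ (p.1 : ℝ) ^ (-s) := fun p => by positivity
  refine Finset.prod_le_prod (fun p _ => mul_self_nonneg _) fun p _ => ?_
  have := key p
  have := key0 p
  rw [twist_apply, twist_apply, ArithmeticFunction.cardFactors_apply_prime p.2, ← mul_inv]
  apply inv_anti₀
  · linarith
  · nlinarith

lemma sum_almost_le (k : ℕ) (s : ℝ) (hs : 1 < s) (u : Finset (almostPrimes k)) :
    ∑ a ∈ u, (a.1 : ℝ) ^ (-s) ≤ 2 ^ k * √(∑' n : ℕ, 1 / (n : ℝ) ^ s) := by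
  have hs0 : s ≠ 0 := by linarith
  have h1 := twist_sq_le s hs0 hs
  have hS := (summable_twist (1/2) s hs0 hs (by norm_num) (by norm_num)).of_norm
  have h2 : ∑' n, twist 1 s hs0 n = ∑' n : ℕ, 1 / (n : ℝ) ^ s := by
    refine tsum_congr fun n => ?_
    rw [twist_apply, Real.rpow_neg (Nat.cast_nonneg _)]; simp
  rw [h2, ← pow_two] at h1
  have h3 := Real.le_sqrt_of_sq_le h1
  have h4 : ∑ a ∈ u, (a.1 : ℝ) ^ (-s) = 2 ^ k * ∑ a ∈ u, twist (1/2) s hs0 a.1 := by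
    rw [Finset.mul_sum]
    refine Finset.sum_congr rfl fun a _ => ?_
    rw [twist_apply, ArithmeticFunction.cardFactors_apply, a.2.2, ← mul_assoc, ← mul_pow]
    norm_num
  rw [h4]
  refine mul_le_mul_of_nonneg_left (le_trans ?_ h3) (by positivity)
  have h5 : ∑ a ∈ u, twist (1/2) s hs0 a.1 =
      ∑ n ∈ u.map (Function.Embedding.subtype _), twist (1/2) s hs0 n := by
    simp
  rw [h5]
  refine hS.sum_le_tsum _ fun n _ => ?_
  rw [twist_apply]; positivity

lemma exists_delta : ∃ δ : ℝ, 0 < δ ∧ ∀ s : ℝ, 1 < s → s ≤ 1 + δ →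
    ∑' n : ℕ, 1 / (n : ℝ) ^ s ≤ 2 * (s - 1)⁻¹ := by
  have h := tendsto_sub_mul_tsum_nat_rpow.eventually (Iio_mem_nhds (show (1:ℝ) < 2 by norm_num))
  rw [Filter.Eventually, mem_nhdsGT_iff_exists_Ioc_subset] at h
  obtain ⟨b, hb, hb2⟩ := h
  have hb' : (1:ℝ) < b := hb
  refine ⟨b - 1, by linarith, fun s hs1 hs2 => ?_⟩
  have h3 := hb2 (show s ∈ Set.Ioc 1 b from ⟨hs1, by linarith⟩)
  simp only [Set.mem_ofPred_eq, Set.mem_Iio] at h3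
  have h4 : 0 < s - 1 := by linarith
  rw [← div_eq_mul_inv, le_div_iff₀ h4]
  linarith

lemma two_le_almost {k : ℕ} (hk : 1 ≤ k) (a : almostPrimes k) : 2 ≤ a.1 := by
  obtain ⟨a, h0, hl⟩ := a
  show 2 ≤ a
  by_contra h
  have : a = 1 := by omega
  subst this
  simp at hl
  omega

lemma rpow_eq_exp {a : ℕ} (ha : 2 ≤ a) (s : ℝ) : (a : ℝ) ^ (-s) = exp (-(log a) * s) := by
  rw [Real.rpow_def_of_pos (by exact_mod_cast (by omega : 0 < a))]
  ring_nf

lemma log_ge {a : ℕ} (ha : 2 ≤ a) : log 2 ≤ log (a : ℝ) :=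
  Real.log_le_log (by norm_num) (by exact_mod_cast ha)

lemma log_two_pos' : 0 < log (2:ℝ) := Real.log_pos (by norm_num)

lemma trunc_integral {a : ℕ} (ha : 2 ≤ a) (δ : ℝ) :
    ∫ s in (1:ℝ)..(1 + δ), (a : ℝ) ^ (-s) = (1 / (a * log a)) * (1 - exp (-(log a) * δ)) := by
  have hl : 0 < log (a : ℝ) := lt_of_lt_of_le log_two_pos' (log_ge ha)
  have ha0 : (0:ℝ) < a := by exact_mod_cast (by omega : 0 < a)
  simp_rw [rpow_eq_exp ha]
  have hd : ∀ x ∈ Set.uIcc (1:ℝ) (1 + δ), HasDerivAt (fun x => - exp (-(log a) * x) / log a)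
      (exp (-(log a) * x)) x := by
    intro x _
    have := ((((hasDerivAt_id x).const_mul (-(log (a:ℝ)))).exp).neg).div_const (log (a:ℝ))
    refine this.congr_deriv ?_
    simp only [id]
    field_simp
  rw [intervalIntegral.integral_eq_sub_of_hasDerivAt hd
    (Continuous.intervalIntegrable (by fun_prop) _ _)]
  have e1 : exp (-(log (a:ℝ)) * (1 + δ)) = (1 / a) * exp (-(log a) * δ) := by
    rw [mul_add, Real.exp_add, mul_one, Real.exp_neg, Real.exp_log ha0]; simp
  have e2 : exp (-(log (a:ℝ)) * 1) = 1 / a := by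
    rw [mul_one, Real.exp_neg, Real.exp_log ha0]; simp
  rw [e1, e2]
  field_simp
  ring

lemma summable_log (k : ℕ) (hk : 1 ≤ k) :
    Summable (fun a : almostPrimes k => 1 / ((a.1 : ℝ) * log a.1)) := by
  obtain ⟨δ, hδ, hb⟩ := exists_delta
  set c := 1 - exp (-(log 2) * δ) with hc
  have hcpos : 0 < c := by
    have : exp (-(log 2) * δ) < 1 := by
      rw [Real.exp_lt_one_iff]
      have := mul_pos log_two_pos' hδ
      linarith
    linarith
  have hI : IntervalIntegrable (fun s : ℝ => 2 ^ k * (√2 * (s - 1) ^ (-(1/2) : ℝ)))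
      volume 1 (1 + δ) := by
    have h := intervalIntegral.intervalIntegrable_rpow' (a := 0) (b := δ)
      (r := (-(1/2) : ℝ)) (by norm_num)
    have h := h.comp_sub_right 1
    rw [zero_add, add_comm] at h
    exact (h.const_mul _).const_mul _
  refine summable_of_sum_le
    (c := (∫ s in (1:ℝ)..(1 + δ), 2 ^ k * (√2 * (s - 1) ^ (-(1/2) : ℝ))) / c) ?_ fun u => ?_
  · intro a
    have := two_le_almost hk a
    have := lt_of_lt_of_le log_two_pos' (log_ge this)
    show 0 ≤ 1 / ((a.1 : ℝ) * log a.1)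
    positivity
  have hcont : ∀ a : almostPrimes k, Continuous (fun s : ℝ => (a.1 : ℝ) ^ (-s)) := by
    intro a
    simp_rw [rpow_eq_exp (two_le_almost hk a)]
    fun_prop
  rw [le_div_iff₀ hcpos, Finset.sum_mul]
  calc ∑ a ∈ u, 1 / ((a.1 : ℝ) * log a.1) * c
      ≤ ∑ a ∈ u, ∫ s in (1:ℝ)..(1 + δ), (a.1 : ℝ) ^ (-s) := by
        refine Finset.sum_le_sum fun a _ => ?_
        have h2 := two_le_almost hk a
        have h3 := log_ge h2
        have h4 := lt_of_lt_of_le log_two_pos' h3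
        rw [trunc_integral h2]
        refine mul_le_mul_of_nonneg_left ?_ (by positivity)
        rw [hc]
        have : exp (-(log (a.1 : ℝ)) * δ) ≤ exp (-(log 2) * δ) := by
          apply Real.exp_le_exp.2
          nlinarith
        linarith
    _ = ∫ s in (1:ℝ)..(1 + δ), ∑ a ∈ u, (a.1 : ℝ) ^ (-s) := by
        rw [intervalIntegral.integral_finsetSum]
        intro a _
        exact (hcont a).intervalIntegrable _ _
    _ ≤ _ := by
        refine intervalIntegral.integral_mono_on_of_le_Ioo (by linarith) ?_ hI ?_
        · exact (continuous_finsetSum _ fun a _ => hcont a).intervalIntegrable _ _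
        · intro s hs
          refine (sum_almost_le k s hs.1 u).trans ?_
          refine mul_le_mul_of_nonneg_left ?_ (by positivity)
          have hs' : 0 < s - 1 := by linarith [hs.1]
          refine (Real.sqrt_le_sqrt (hb s hs.1 hs.2.le)).trans ?_
          rw [Real.sqrt_mul (by norm_num), Real.rpow_neg hs'.le, Real.sqrt_inv,
            Real.sqrt_eq_rpow (s - 1)]

lemma term_eq {a : ℕ} (ha : 2 ≤ a) (h s : ℝ) :
    (a : ℝ) ^ (-s) * exp ((1 - s) * h) = exp h * exp (-(log a + h) * s) := by
  rw [rpow_eq_exp ha, ← Real.exp_add, ← Real.exp_add]; ring_nf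

lemma transSum_integral (k : ℕ) (hk : 1 ≤ k) (h : ℝ) (hh : 0 ≤ h) :
    IntegrableOn (fun s => Pk k s * exp ((1 - s) * h)) (Set.Ioi 1) ∧
    ∫ s in Set.Ioi 1, Pk k s * exp ((1 - s) * h) = transSum (almostPrimes k) h := by
  have hlog : ∀ a : almostPrimes k, 0 < log (a.1 : ℝ) := fun a =>
    lt_of_lt_of_le log_two_pos' (log_ge (two_le_almost hk a))
  have hpos : ∀ a : almostPrimes k, (0:ℝ) < a.1 := fun a => by exact_mod_cast a.2.1
  have hint : ∀ a : almostPrimes k,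
      IntegrableOn (fun s => (a.1 : ℝ) ^ (-s) * exp ((1 - s) * h)) (Set.Ioi 1) := by
    intro a
    simp_rw [term_eq (two_le_almost hk a)]
    exact (integrableOn_exp_mul_Ioi (by linarith [hlog a]) 1).const_mul _
  have hval : ∀ a : almostPrimes k,
      ∫ s in Set.Ioi (1:ℝ), (a.1 : ℝ) ^ (-s) * exp ((1 - s) * h)
        = 1 / ((a.1 : ℝ) * (log a.1 + h)) := by
    intro a
    have h1 := hlog a
    have h2 := hpos a
    simp_rw [term_eq (two_le_almost hk a)]
    rw [integral_const_mul, integral_exp_mul_Ioi (by linarith [hlog a])]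
    have : exp (-(log (a.1:ℝ) + h) * 1) = 1 / a.1 * (exp h)⁻¹ := by
      rw [mul_one, neg_add, Real.exp_add, Real.exp_neg, Real.exp_neg, Real.exp_log h2]; simp
    rw [this]
    have h3 : log (a.1:ℝ) + h ≠ 0 := by linarith
    have h4 := (Real.exp_pos h).ne'
    field_simp
  have hsum : Summable (fun a : almostPrimes k => 1 / ((a.1 : ℝ) * (log a.1 + h))) := by
    refine Summable.of_nonneg_of_le (fun a => ?_) (fun a => ?_) (summable_log k hk)
    · have h1 := hlog a
      positivity
    · have h1 := hlog a
      have h2 := hpos a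
      apply one_div_le_one_div_of_le (by positivity)
      nlinarith
  have key := hasSum_integral_of_summable_integral_norm
    (μ := volume.restrict (Set.Ioi (1:ℝ)))
    (F := fun (a : almostPrimes k) (s : ℝ) => (a.1 : ℝ) ^ (-s) * exp ((1 - s) * h))
    hint (by
      refine hsum.congr fun a => ?_
      rw [← hval a]
      refine integral_congr_ae (Filter.Eventually.of_forall fun s => ?_)
      simp only
      rw [Real.norm_of_nonneg (by positivity)])
  have heq : (∫ s in Set.Ioi 1, Pk k s * exp ((1 - s) * h)) = transSum (almostPrimes k) h := by
    simp_rw [hval] at key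
    unfold transSum
    rw [key.tsum_eq]
    simp_rw [tsum_mul_right]
    rfl
  refine ⟨?_, heq⟩
  apply Integrable.of_integral_ne_zero
  rw [heq]
  have hmem : 2 ^ k ∈ almostPrimes k :=
    ⟨by positivity, by rw [Nat.Prime.primeFactorsList_pow Nat.prime_two]; simp⟩
  refine (hsum.tsum_pos (fun a => ?_) ⟨2 ^ k, hmem⟩ ?_).ne'
  · have h1 := hlog a
    positivity
  · have h1 := hlog ⟨2 ^ k, hmem⟩
    have h2 := hpos ⟨2 ^ k, hmem⟩
    positivity

lemma primeZeta_eq (s : ℝ) : primeZeta s = Pk 1 s := by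
  have : almostPrimes 1 = {p | Nat.Prime p} := by
    ext p
    simp only [almostPrimes, Set.mem_ofPred_eq, ← ArithmeticFunction.cardFactors_apply,
      ArithmeticFunction.cardFactors_eq_one_iff_prime]
    exact ⟨fun h => h.2, fun h => ⟨h.pos, h⟩⟩
  unfold primeZeta Pk
  rw [this]
  rfl

theorem stmt_14 (k : ℕ) (hk : 2 ≤ k) (σ : ℝ) (hσ : 1 < σ)
    (h1 : ∀ s : ℝ, 1 < s → s < σ → primeZeta s < Pk k s)
    (h2 : ∀ s : ℝ, σ < s → Pk k s < primeZeta s) :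
    StrictMonoOn
      (fun h : ℝ => Real.exp ((σ - 1) * h) *
        (transSum (almostPrimes k) h - transSum (almostPrimes 1) h))
      (Set.Ici 0) := by
  have rep : ∀ h : ℝ, 0 ≤ h →
      IntegrableOn (fun s => (Pk k s - Pk 1 s) * exp ((σ - s) * h)) (Set.Ioi 1) ∧
      ∫ s in Set.Ioi 1, (Pk k s - Pk 1 s) * exp ((σ - s) * h) =
        Real.exp ((σ - 1) * h) *
        (transSum (almostPrimes k) h - transSum (almostPrimes 1) h) := by
    intro h hh
    obtain ⟨i1, e1⟩ := transSum_integral k (by omega) h hh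
    obtain ⟨i2, e2⟩ := transSum_integral 1 le_rfl h hh
    have : (fun s => (Pk k s - Pk 1 s) * exp ((σ - s) * h)) = fun s => exp ((σ - 1) * h) *
        (Pk k s * exp ((1 - s) * h) - Pk 1 s * exp ((1 - s) * h)) := by
      funext s
      have : exp ((σ - s) * h) = exp ((σ - 1) * h) * exp ((1 - s) * h) := by
        rw [← Real.exp_add]; ring_nf
      rw [this]; ring
    rw [this]
    refine ⟨(i1.sub i2).const_mul _, ?_⟩
    rw [integral_const_mul, integral_sub i1 i2, e1, e2]
  intro x hx y hy hxy
  obtain ⟨ix, ex⟩ := rep x hx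
  obtain ⟨iy, ey⟩ := rep y hy
  simp only
  rw [← ex, ← ey, ← sub_pos, ← integral_sub iy ix]
  have hp : ∀ s : ℝ, 1 < s → s ≠ σ → 0 < (Pk k s - Pk 1 s) * exp ((σ - s) * y) -
      (Pk k s - Pk 1 s) * exp ((σ - s) * x) := by
    intro s hs hne
    rw [← mul_sub]
    rcases lt_or_gt_of_ne hne with hlt | hgt
    · have a1 := h1 s hs hlt
      rw [primeZeta_eq] at a1
      refine mul_pos (by linarith) (sub_pos.2 (Real.exp_lt_exp.2 ?_))
      nlinarith
    · have a1 := h2 s hgt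
      rw [primeZeta_eq] at a1
      refine mul_pos_of_neg_of_neg (by linarith) (sub_neg.2 (Real.exp_lt_exp.2 ?_))
      nlinarith
  refine (setIntegral_pos_iff_support_of_nonneg_ae ?_ (iy.sub ix)).2 ?_
  rotate_left
  · refine lt_of_lt_of_le ?_ (measure_mono (show Set.Ioo 1 σ ⊆ _ from fun s hs =>
      ⟨(hp s hs.1 hs.2.ne).ne', hs.1⟩))
    simp [hσ]
  · refine (ae_restrict_iff' measurableSet_Ioi).2 (Filter.Eventually.of_forall fun s hs => ?_)
    rcases eq_or_ne s σ with rfl | hne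
    · simp
    · exact (hp s hs hne).le
end
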